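/- Assume a_0 is the unique point of ℤ^n lying in the interior of Δ, the convex hull of a_1,…,a_N in ℝ^n (so that â_0 is the unique element of M° with 0-th coordinate 1). Let ξ ∈ S be such that ξ_{â_0} is an invertible element of R and ‖ξ_{â_0}‖ = ‖ξ‖. Then the coefficient η_{â_0} of α*(ξ) is an invertible element of R and ‖α*(ξ)‖ = ‖η_{â_0}‖ = (1/p)·‖ξ_{â_0}‖. If moreover ξ ∈ S' and ξ_{â_0} is invertible in R', then η_{â_0} is invertible in R'. -/

import Mathlib

open scoped BigOperators Classical

namespace AHG

/-- `hat v = (1, v) ∈ ℤ^{n+1}`: coordinate `0` equals `1`, the rest is `v`. -/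
def hat {n : ℕ} (v : Fin n → ℤ) : Fin (n + 1) → ℤ := Fin.cons 1 v

/-- The coefficients `b_i` of the Dwork series
`θ(t) = exp(π(t - t^p)) = exp(πt)·exp(-πt^p) = Σ b_i t^i`;
explicitly `b_i = Σ_{j + p k = i} π^{j+k} (-1)^k / (j! k!)`. -/
noncomputable def dworkB (p : ℕ) {K : Type*} [Field K] (π : K) (i : ℕ) : K :=
  ∑ k ∈ Finset.range (i + 1),
    if p * k ≤ i then
      ((-1 : K) ^ k * π ^ (i - p * k + k)) /
        ((Nat.factorial (i - p * k) : K) * (Nat.factorial k : K))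
    else 0

/-- The real cone `C` generated by `â_0, …, â_N`. -/
def cone {n N : ℕ} (a : Fin (N + 1) → Fin n → ℤ) : Set (Fin (n + 1) → ℝ) :=
  {x | ∃ t : Fin (N + 1) → ℝ, (∀ j, 0 ≤ t j) ∧
      x = ∑ j, t j • fun i => (hat (a j) i : ℝ)}

/-- `M = C ∩ ℤA`. -/
def latticeM {n N : ℕ} (a : Fin (N + 1) → Fin n → ℤ) : Set (Fin (n + 1) → ℤ) :=
  {μ | (fun i => (μ i : ℝ)) ∈ cone a ∧
      μ ∈ AddSubgroup.closure (Set.range fun j => hat (a j))}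

/-- `M°`: the elements of `M` lying on no proper (exposed) face of `C`, i.e. every linear
functional nonnegative on `C` and vanishing at `μ` vanishes identically on `C`. -/
def latticeMint {n N : ℕ} (a : Fin (N + 1) → Fin n → ℤ) : Set (Fin (n + 1) → ℤ) :=
  {μ | μ ∈ latticeM a ∧
      ∀ ℓ : (Fin (n + 1) → ℝ) →ₗ[ℝ] ℝ, (∀ x ∈ cone a, 0 ≤ ℓ x) →
        ℓ (fun i => (μ i : ℝ)) = 0 → ∀ x ∈ cone a, ℓ x = 0}

/-- `a 0` is the unique lattice point interior to `Δ = conv(a 1, …, a N)`. -/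
def uniqueInteriorPoint {n N : ℕ} (a : Fin (N + 1) → Fin n → ℤ) : Prop :=
  (fun i => (a 0 i : ℝ)) ∈
      interior (convexHull ℝ (Set.range fun j : Fin N => fun i => (a j.succ i : ℝ))) ∧
    ∀ v : Fin n → ℤ,
      (fun i => (v i : ℝ)) ∈
          interior (convexHull ℝ (Set.range fun j : Fin N => fun i => (a j.succ i : ℝ))) →
        v = a 0

/-- The set `L_+`, identified with the tuples `(l_1,…,l_N) ∈ ℤ_{≥0}^N` such that
`Σ l_i â_i = (Σ l_i) â_0` (then `l_0 = -Σ l_i`). -/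
def LplusSet {n N : ℕ} (a : Fin (N + 1) → Fin n → ℤ) : Set (Fin N → ℕ) :=
  {l | ∑ i : Fin N, l i • hat (a i.succ) = (∑ i : Fin N, l i) • hat (a 0)}

/-- The norm (sup of coefficient norms) of an element of `R`, i.e. of a formal power series
in the variables `λ_i/λ_0`, `i = 1, …, N`. -/
noncomputable def Rnorm {N : ℕ} {K : Type*} [NormedField K]
    (f : MvPowerSeries (Fin N) K) : ℝ :=
  ⨆ ν : Fin N →₀ ℕ, ‖f ν‖

/-- Membership in `R`: bounded coefficients. -/
def memR {N : ℕ} {K : Type*} [NormedField K] (f : MvPowerSeries (Fin N) K) : Prop :=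
  BddAbove (Set.range fun ν : Fin N →₀ ℕ => ‖f ν‖)

/-- Norm-convergence (in the sup norm of `R`) of a series of elements of `R` to `g`. -/
def HasSumR {ι : Type*} {N : ℕ} {K : Type*} [NormedField K]
    (f : ι → MvPowerSeries (Fin N) K) (g : MvPowerSeries (Fin N) K) : Prop :=
  Filter.Tendsto (fun s : Finset ι => Rnorm (g - ∑ i ∈ s, f i)) Filter.atTop (nhds 0)

/-- Invertibility in `R`. -/
def invR {N : ℕ} {K : Type*} [NormedField K] (f : MvPowerSeries (Fin N) K) : Prop :=
  memR f ∧ ∃ g : MvPowerSeries (Fin N) K, memR g ∧ f * g = 1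

/-- `B_μ(1, y_1, …, y_N)` as a power series (in fact a polynomial) in `y_i = λ_i/λ_0`:
the coefficient of `y^ν` is `b_{ν_0} b_{ν_1} ⋯ b_{ν_N}` where `ν_0 = μ_0 - Σ ν_i`,
whenever `(ν_0, ν_1, …, ν_N)` is a nonnegative solution of `Σ ν_i â_i = μ`, and `0` otherwise. -/
noncomputable def Bone (p : ℕ) {n N : ℕ} (a : Fin (N + 1) → Fin n → ℤ)
    {K : Type*} [Field K] (π : K) (μ : Fin (n + 1) → ℤ) : MvPowerSeries (Fin N) K :=
  fun ν =>
    if 0 ≤ μ 0 - ∑ i : Fin N, (ν i : ℤ) ∧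
        (μ 0 - ∑ i : Fin N, (ν i : ℤ)) • hat (a 0) +
          ∑ i : Fin N, (ν i : ℤ) • hat (a i.succ) = μ then
      dworkB p π (μ 0 - ∑ i : Fin N, (ν i : ℤ)).toNat * ∏ i : Fin N, dworkB p π (ν i)
    else 0

/-- The substitution `λ_i/λ_0 ↦ λ_i^p/λ_0^p` on `R`, i.e. `ξ(λ) ↦ ξ(λ^p)`. -/
noncomputable def frobR (p : ℕ) {N : ℕ} {K : Type*} [Field K]
    (f : MvPowerSeries (Fin N) K) : MvPowerSeries (Fin N) K :=
  fun ν => if h : ∃ ν' : Fin N →₀ ℕ, p • ν' = ν then f h.choose else 0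

/-- The term indexed by `ν ∈ M°` in the series defining `η_ρ`:
`π^{ρ_0-ν_0} B_{pν-ρ}(1, λ_1/λ_0, …, λ_N/λ_0) ξ_ν(λ^p)` when `pν - ρ ∈ M`, else `0`. -/
noncomputable def etaTerm (p : ℕ) {n N : ℕ} (a : Fin (N + 1) → Fin n → ℤ)
    {K : Type*} [Field K] (π : K)
    (ξ : {μ : Fin (n + 1) → ℤ // μ ∈ latticeMint a} → MvPowerSeries (Fin N) K)
    (ρ : Fin (n + 1) → ℤ) (ν : {μ : Fin (n + 1) → ℤ // μ ∈ latticeMint a}) :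
    MvPowerSeries (Fin N) K :=
  if (p : ℤ) • ν.1 - ρ ∈ latticeM a then
    π ^ (ρ 0 - ν.1 0) • (Bone p a π ((p : ℤ) • ν.1 - ρ) * frobR p (ξ ν))
  else 0


/-- The index type `M°` (as a subtype). -/
abbrev Msub {n N : ℕ} (a : Fin (N + 1) → Fin n → ℤ) : Type _ :=
  {μ : Fin (n + 1) → ℤ // μ ∈ latticeMint a}

/-- Membership in `S`: a family `(ξ_μ)_{μ ∈ M°}` of elements of `R` with uniformly
bounded coefficients. -/
def memS {n N : ℕ} (a : Fin (N + 1) → Fin n → ℤ) {K : Type*} [NormedField K]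
    (ξ : {μ : Fin (n + 1) → ℤ // μ ∈ latticeMint a} → MvPowerSeries (Fin N) K) : Prop :=
  BddAbove (Set.range
    fun q : {μ : Fin (n + 1) → ℤ // μ ∈ latticeMint a} × (Fin N →₀ ℕ) => ‖ξ q.1 q.2‖)

/-- The norm on `S`. -/
noncomputable def Snorm {n N : ℕ} (a : Fin (N + 1) → Fin n → ℤ) {K : Type*} [NormedField K]
    (ξ : {μ : Fin (n + 1) → ℤ // μ ∈ latticeMint a} → MvPowerSeries (Fin N) K) : ℝ :=
  ⨆ μ : {μ : Fin (n + 1) → ℤ // μ ∈ latticeMint a}, Rnorm (ξ μ)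

/-- The truncation `Φ_1` of `Φ`, as a function of `λ = (λ_0, …, λ_N)`. -/
noncomputable def Phi1 (p : ℕ) {n N : ℕ} (a : Fin (N + 1) → Fin n → ℤ)
    {K : Type*} [Field K] (lam : Fin (N + 1) → K) : K :=
  ∑ l ∈ (Fintype.piFinset fun _ : Fin N => Finset.range p).filter
      (fun l => l ∈ LplusSet a ∧ ∑ i : Fin N, l i ≤ p - 1),
    (-1 : K) ^ (∑ i : Fin N, l i) * (Nat.multinomial Finset.univ l : K) *
      ∏ i : Fin N, (lam i.succ / lam 0) ^ l i

/-- The open polydisk `𝒟`. -/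
def Dopen {N : ℕ} {K : Type*} [NormedField K] : Set (Fin (N + 1) → K) :=
  {lam | lam 0 ≠ 0 ∧ ∀ i : Fin N, ‖lam i.succ / lam 0‖ < 1}

/-- The region `𝒟_+`. -/
def Dplus (p : ℕ) {n N : ℕ} (a : Fin (N + 1) → Fin n → ℤ) {K : Type*} [NormedField K] :
    Set (Fin (N + 1) → K) :=
  {lam | lam 0 ≠ 0 ∧ (∀ i : Fin N, ‖lam i.succ / lam 0‖ ≤ 1) ∧ ‖Phi1 p a lam‖ = 1}

/-- `f` is (on `𝒟_+`) a rational function of `λ_1/λ_0, …, λ_N/λ_0` defined at every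
point of `𝒟_+`. -/
def RatOnDplus (p : ℕ) {n N : ℕ} (a : Fin (N + 1) → Fin n → ℤ) {K : Type*} [NormedField K]
    (f : (Fin (N + 1) → K) → K) : Prop :=
  ∃ q r : MvPolynomial (Fin N) K,
    (∀ lam ∈ Dplus p a (K := K), MvPolynomial.eval (fun i => lam i.succ / lam 0) r ≠ 0) ∧
    ∀ lam ∈ Dplus p a (K := K),
      f lam = MvPolynomial.eval (fun i => lam i.succ / lam 0) q /
        MvPolynomial.eval (fun i => lam i.succ / lam 0) r

/-- `F` is a uniform limit on `𝒟_+` of rational functions in the `λ_i/λ_0` defined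
at every point of `𝒟_+`. -/
def UnifLimitRat (p : ℕ) {n N : ℕ} (a : Fin (N + 1) → Fin n → ℤ) {K : Type*} [NormedField K]
    (F : (Fin (N + 1) → K) → K) : Prop :=
  ∃ u : ℕ → (Fin (N + 1) → K) → K, (∀ k, RatOnDplus p a (u k)) ∧
    TendstoUniformlyOn u F Filter.atTop (Dplus p a (K := K))

/-- Membership in `R'`: the power series converges on `𝒟` and its sum extends to an
element of `R'`, i.e. to a uniform limit on `𝒟_+` of rational functions in the `λ_i/λ_0`
defined at every point of `𝒟_+`. -/
def memR' (p : ℕ) {n N : ℕ} (a : Fin (N + 1) → Fin n → ℤ) {K : Type*} [NormedField K]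
    (c : MvPowerSeries (Fin N) K) : Prop :=
  ∃ F : (Fin (N + 1) → K) → K, UnifLimitRat p a F ∧
    ∀ lam ∈ Dopen (N := N) (K := K),
      HasSum (fun ν : Fin N →₀ ℕ => c ν * ∏ i : Fin N, (lam i.succ / lam 0) ^ ν i) (F lam)

/-- Invertibility in `R'`. -/
def invR' (p : ℕ) {n N : ℕ} (a : Fin (N + 1) → Fin n → ℤ) {K : Type*} [NormedField K]
    (f : MvPowerSeries (Fin N) K) : Prop :=
  memR' p a f ∧ ∃ g : MvPowerSeries (Fin N) K, memR' p a g ∧ f * g = 1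

/-- Membership in `S'`. -/
def memS' (p : ℕ) {n N : ℕ} (a : Fin (N + 1) → Fin n → ℤ) {K : Type*} [NormedField K]
    (ξ : {μ : Fin (n + 1) → ℤ // μ ∈ latticeMint a} → MvPowerSeries (Fin N) K) : Prop :=
  memS a ξ ∧ ∀ μ, memR' p a (ξ μ)

/-- Membership in `T`: `ξ ∈ S`, `ξ_{â_0} = 1` and `‖ξ‖ = 1`; the distinguished index
`μ0 ∈ M°` is the point `â_0`. -/
def memT {n N : ℕ} (a : Fin (N + 1) → Fin n → ℤ) {K : Type*} [NormedField K]
    (μ0 : {μ : Fin (n + 1) → ℤ // μ ∈ latticeMint a})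
    (ξ : {μ : Fin (n + 1) → ℤ // μ ∈ latticeMint a} → MvPowerSeries (Fin N) K) : Prop :=
  memS a ξ ∧ ξ μ0 = 1 ∧ Snorm a ξ = 1

/-- `ζ` is a value of the map `β` at `ξ`: `ζ = α*(ξ)/η_{â_0}`, where
`α*(ξ) = (η_ρ)_{ρ ∈ M°}` is given by the norm-convergent series of `etaTerm`s. -/
def isBeta (p : ℕ) {n N : ℕ} (a : Fin (N + 1) → Fin n → ℤ) {K : Type*} [NormedField K] (π : K)
    (μ0 : {μ : Fin (n + 1) → ℤ // μ ∈ latticeMint a})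
    (ξ ζ : {μ : Fin (n + 1) → ℤ // μ ∈ latticeMint a} → MvPowerSeries (Fin N) K) : Prop :=
  ∃ η : {μ : Fin (n + 1) → ℤ // μ ∈ latticeMint a} → MvPowerSeries (Fin N) K,
    (∀ ρ, HasSumR (etaTerm p a π ξ ρ.1) (η ρ)) ∧ ∀ ρ, ζ ρ = η ρ * (η μ0)⁻¹

/-- The coefficients `ξ_ρ` (Eq. (3.4) of the paper) of
`ξ(λ,x) = γ°(G(λ_0,x) ∏_{i=1}^N exp(πλ_i x^{â_i}))`:
`ξ_ρ = Σ (-1)^{ρ_0-1+Σl_i} (ρ_0-1+Σl_i)!/(l_1!⋯l_N!) ∏ (λ_i/λ_0)^{l_i}`, summed over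
`(l_1,…,l_N) ∈ ℤ_{≥0}^N` such that `l_0 := ρ_0-1+Σl_i ≥ 0` and
`Σ l_i â_i - (l_0+1) â_0 = -ρ`. -/
noncomputable def xiRho {n N : ℕ} (a : Fin (N + 1) → Fin n → ℤ) (K : Type*) [Field K]
    (ρ : Fin (n + 1) → ℤ) : MvPowerSeries (Fin N) K :=
  fun l =>
    if 0 ≤ ρ 0 - 1 + ∑ i : Fin N, (l i : ℤ) ∧
        (∑ i : Fin N, (l i : ℤ) • hat (a i.succ)) -
          (ρ 0 + ∑ i : Fin N, (l i : ℤ)) • hat (a 0) = -ρ then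
      (-1 : K) ^ (ρ 0 - 1 + ∑ i : Fin N, (l i : ℤ)) *
        ((ρ 0 - 1 + ∑ i : Fin N, (l i : ℤ)).toNat.factorial : K) /
        ((∏ i : Fin N, (l i).factorial : ℕ) : K)
    else 0

/-- The series `Φ`, as a formal power series in the variables `λ_i/λ_0`. -/
noncomputable def PhiSeries {n N : ℕ} (a : Fin (N + 1) → Fin n → ℤ) (K : Type*) [Field K] :
    MvPowerSeries (Fin N) K :=
  fun l =>
    if (fun i => l i) ∈ LplusSet a then
      (-1 : K) ^ (∑ i : Fin N, l i) * (Nat.multinomial Finset.univ l : K)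
    else 0

/-- The truncation `Φ_1` of `Φ`, as a formal power series in the variables `λ_i/λ_0`. -/
noncomputable def Phi1Series (p : ℕ) {n N : ℕ} (a : Fin (N + 1) → Fin n → ℤ)
    (K : Type*) [Field K] : MvPowerSeries (Fin N) K :=
  fun l =>
    if (fun i => l i) ∈ LplusSet a ∧ ∑ i : Fin N, l i ≤ p - 1 then
      (-1 : K) ^ (∑ i : Fin N, l i) * (Nat.multinomial Finset.univ l : K)
    else 0

/-- `B_μ(λ_0, …, λ_N)` as a function of `λ` (a finite sum; `finsum` junk value `0`
is irrelevant since the relevant index set is finite). -/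
noncomputable def Bfull (p : ℕ) {n N : ℕ} (a : Fin (N + 1) → Fin n → ℤ)
    {K : Type*} [Field K] (π : K) (μ : Fin (n + 1) → ℤ) (lam : Fin (N + 1) → K) : K :=
  finsum fun ν : Fin (N + 1) → ℕ =>
    if ∑ j, ν j • hat (a j) = μ then
      (∏ j, dworkB p π (ν j)) * ∏ j, lam j ^ ν j
    else 0

end AHG
namespace AHGp
open PowerSeries

/-- growth function -/
noncomputable def DD (w C : ℝ) (m : ℕ) : ℝ := if m = 0 then 1 else w * C ^ m

lemma DD_nonneg {w C : ℝ} (hw : 0 < w) (hC : 1 ≤ C) (m : ℕ) : 0 < DD w C m := by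
  unfold DD; split_ifs <;> positivity

lemma DD_mul {w C : ℝ} (hw : 0 < w) (hw1 : w ≤ 1) (hC : 1 ≤ C) (m m' : ℕ) :
    DD w C m * DD w C m' ≤ DD w C (m + m') := by
  unfold DD
  by_cases h : m = 0
  · simp [h]
  by_cases h' : m' = 0
  · simp [h']
  have : m + m' ≠ 0 := by omega
  simp only [h, h', this, if_false]
  rw [pow_add]
  have : 0 < C ^ m * C ^ m' := by positivity
  nlinarith [mul_le_mul_of_nonneg_right hw1 (mul_pos hw this).le]

lemma DD_mono {w C : ℝ} (hw : 0 < w) (hC : 1 ≤ C) (hwC : 1 ≤ w * C) : Monotone (DD w C) := by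
  apply monotone_nat_of_le_succ
  intro m
  unfold DD
  by_cases h : m = 0
  · simp [h, hwC]
  · simp only [h, if_false, Nat.succ_ne_zero]
    gcongr
    · omega

lemma DD_ge_one {w C : ℝ} (hw : 0 < w) (hC : 1 ≤ C) (hwC : 1 ≤ w * C) (m : ℕ) : 1 ≤ DD w C m := by
  have := DD_mono hw hC hwC (Nat.zero_le m)
  simpa [DD] using this

variable {p : ℕ} [hp : Fact p.Prime]

/-- The ring of power series with controlled growth. -/
noncomputable def subA (p : ℕ) [hp : Fact p.Prime] (w C : ℝ) (hw : 0 < w) (hw1 : w ≤ 1) (hC : 1 ≤ C) (hwC : 1 ≤ w * C) :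
    Subring (PowerSeries ℚ_[p]) where
  carrier := {f | ∀ k, ‖coeff k f‖ ≤ DD w C (k / p ^ 2)}
  mul_mem' := by
    intro f g hf hg k
    rw [coeff_mul]
    apply IsUltrametricDist.norm_sum_le_of_forall_le_of_nonneg (DD_nonneg hw hC _).le
    intro x hx
    rw [norm_mul]
    rw [Finset.HasAntidiagonal.mem_antidiagonal] at hx
    calc _ ≤ DD w C (x.1 / p ^ 2) * DD w C (x.2 / p ^ 2) := 
          mul_le_mul (hf _) (hg _) (norm_nonneg _) (DD_nonneg hw hC _).le
      _ ≤ _ := DD_mul hw hw1 hC _ _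
      _ ≤ _ := by
        apply DD_mono hw hC hwC
        rw [← hx]
        exact Nat.div_add_div_le_add_div
  one_mem' := by
    intro k
    rw [coeff_one]
    have := DD_ge_one hw hC hwC (k / p ^ 2)
    split_ifs
    · simpa using this
    · simp; linarith
  add_mem' := by
    intro f g hf hg k
    rw [map_add]
    exact (IsUltrametricDist.norm_add_le_max _ _).trans (max_le (hf k) (hg k))
  zero_mem' := by
    intro k; simp; exact (DD_nonneg hw hC _).le
  neg_mem' := by
    intro f hf k
    rw [map_neg, norm_neg]; exact hf k

lemma sum_pow_prime {R : Type*} [CommRing R] {ι : Type*} (s : Finset ι) (f : ι → R) (p : ℕ)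
    (hp : p.Prime) : ∃ r, (∑ i ∈ s, f i) ^ p = ∑ i ∈ s, f i ^ p + p * r := by
  induction s using Finset.induction_on with
  | empty => exact ⟨0, by simp [hp.ne_zero]⟩
  | insert a s ha ih =>
    obtain ⟨r, hr⟩ := ih
    obtain ⟨r', hr'⟩ := exists_add_pow_prime_eq hp (f a) (∑ i ∈ s, f i)
    rw [Finset.sum_insert ha, Finset.sum_insert ha, hr', hr]
    exact ⟨r + f a * (∑ i ∈ s, f i) * r', by ring⟩

lemma padic_pow_sub (x : ℚ_[p]) (hx : ‖x‖ ≤ 1) : ‖x ^ p - x‖ ≤ (p : ℝ)⁻¹ := by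
  obtain ⟨y, rfl⟩ : ∃ y : ℤ_[p], (y : ℚ_[p]) = x := ⟨⟨x, hx⟩, rfl⟩
  have h := PadicInt.norm_le_pow_iff_mem_span_pow (y ^ p - y) 1
  have h2 : (y ^ p - y) ∈ Ideal.span {(p : ℤ_[p]) ^ 1} := by
    rw [pow_one, ← PadicInt.maximalIdeal_eq_span_p, ← PadicInt.ker_toZMod, RingHom.mem_ker]
    simp
  have h3 := h.2 h2
  rw [PadicInt.norm_def] at h3
  simpa using h3

lemma norm_inv_factorial (w : ℝ) (hw : 0 < w) (hwp : w ^ (p - 1) = (p : ℝ)⁻¹) (m : ℕ) (hm : m ≠ 0) :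
    ‖((m.factorial : ℚ_[p]))⁻¹‖ ≤ (w⁻¹) ^ (m - 1) := by
  have hp1 := hp.out.two_le
  have h1 : ‖((m.factorial : ℚ_[p]))⁻¹‖ = (p : ℝ) ^ (padicValNat p m.factorial) := by
    rw [norm_inv, Padic.norm_eq_zpow_neg_valuation (by exact_mod_cast m.factorial_ne_zero)]
    simp
  rw [h1]
  have h2 := sub_one_mul_padicValNat_factorial_lt_of_ne_zero p hm
  have h3 : (p : ℝ) = (w⁻¹) ^ (p - 1) := by rw [inv_pow, hwp, inv_inv]
  have hw1 : w ≤ 1 := by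
    by_contra hcon
    push Not at hcon
    have := one_lt_pow₀ hcon (n := p - 1) (by omega)
    rw [hwp] at this
    have h4 : (1 : ℝ) ≤ p := by exact_mod_cast hp.out.one_le
    have := inv_le_one_of_one_le₀ h4
    linarith
  rw [h3, ← pow_mul]
  apply pow_le_pow_right₀ (one_le_inv_iff₀.2 ⟨hw, hw1⟩)
  omega

/-- The series exp(t + t^p/p). -/
noncomputable def eser (p : ℕ) [hp : Fact p.Prime] : PowerSeries ℚ_[p] :=
  exp ℚ_[p] * expand p hp.out.ne_zero (rescale ((p : ℚ_[p])⁻¹) (exp ℚ_[p]))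

lemma rescale_exp_pow (c : ℚ_[p]) (k : ℕ) :
    (rescale c (exp ℚ_[p])) ^ k = rescale (k * c) (exp ℚ_[p]) := by
  rw [← map_pow, exp_pow_eq_rescale_exp, rescale_rescale, mul_comm]

lemma eser_eq (p : ℕ) [hp : Fact p.Prime] : eser p ^ p =
    expand p hp.out.ne_zero (eser p) * (rescale (p : ℚ_[p]) (exp ℚ_[p]) *
      expand (p * p) (mul_ne_zero hp.out.ne_zero hp.out.ne_zero)
        (rescale (-(p : ℚ_[p])⁻¹) (exp ℚ_[p]))) := by
  have hp0 : (p : ℚ_[p]) ≠ 0 := by exact_mod_cast hp.out.ne_zero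
  have h0 : rescale (p : ℚ_[p])⁻¹ (exp ℚ_[p]) * rescale (-(p : ℚ_[p])⁻¹) (exp ℚ_[p]) = 1 := by
    rw [exp_mul_exp_eq_exp_add]; simp
  unfold eser
  rw [mul_pow, ← map_pow, rescale_exp_pow, mul_inv_cancel₀ hp0, map_mul, ← expand_mul,
    exp_pow_eq_rescale_exp]
  have h1 : (rescale (1 : ℚ_[p])) (exp ℚ_[p]) = exp ℚ_[p] := by simp
  rw [h1]
  have h2 := congrArg (expand (p * p) (mul_ne_zero hp.out.ne_zero hp.out.ne_zero)) h0
  rw [map_mul, map_one] at h2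
  linear_combination (-(rescale (p : ℚ_[p]) (exp ℚ_[p]) * (expand p hp.out.ne_zero) (exp ℚ_[p]))) * h2

lemma constantCoeff_eser : coeff 0 (eser p) = 1 := by
  have : constantCoeff ((rescale (p : ℚ_[p])⁻¹) (exp ℚ_[p])) = 1 := by
    rw [← coeff_zero_eq_constantCoeff, coeff_rescale]; simp
  simp [eser, coeff_mul, this]

lemma coeff_eser (k : ℕ) : coeff k (eser p) = ∑ j ∈ Finset.range (k + 1),
    if p * j ≤ k then (((k - p * j).factorial : ℚ_[p]) * (j.factorial : ℚ_[p]) * (p : ℚ_[p]) ^ j)⁻¹ else 0 := by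
  unfold eser
  rw [mul_comm, coeff_mul, Finset.Nat.sum_antidiagonal_eq_sum_range_succ_mk]
  simp only [coeff_expand, ite_mul, zero_mul]
  rw [← Finset.sum_filter, ← Finset.sum_filter]
  symm
  apply Finset.sum_bij (fun j _ => p * j)
  · intro j hj
    simp only [Finset.mem_filter, Finset.mem_range] at hj ⊢
    exact ⟨by omega, dvd_mul_right _ _⟩
  · intro i _ j _ h
    exact Nat.eq_of_mul_eq_mul_left hp.out.pos h
  · intro j hj
    simp only [Finset.mem_filter, Finset.mem_range] at hj
    obtain ⟨h1, c, rfl⟩ := hj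
    have := Nat.le_mul_of_pos_left c hp.out.pos
    refine ⟨c, ?_, rfl⟩
    simp only [Finset.mem_filter, Finset.mem_range]
    omega
  · intro j hj
    rw [Nat.mul_div_cancel_left _ hp.out.pos]
    simp [coeff_exp]
    ring

section bound
variable {w C : ℝ} {hw : 0 < w} {hw1 : w ≤ 1} {hC : 1 ≤ C} {hwC : 1 ≤ w * C}

lemma mem_subA {f : PowerSeries ℚ_[p]} : f ∈ subA p w C hw hw1 hC hwC ↔
    ∀ k, ‖coeff k f‖ ≤ DD w C (k / p ^ 2) := Iff.rfl

lemma monomial_mem_subA {j : ℕ} {x : ℚ_[p]} (h : ‖x‖ ≤ DD w C (j / p ^ 2)) :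
    monomial j x ∈ subA p w C hw hw1 hC hwC := by
  rw [mem_subA]
  intro k
  rw [coeff_monomial]
  split_ifs with h1
  · rw [h1]; exact h
  · simp; exact (DD_nonneg hw hC _).le

lemma exists_one_add {G : PowerSeries ℚ_[p]} (h0 : coeff 0 G = 1)
    (h : ∀ k, k ≠ 0 → ‖coeff k G‖ ≤ (p : ℝ)⁻¹ * DD w C (k / p ^ 2)) :
    ∃ g ∈ subA p w C hw hw1 hC hwC, G = 1 + (p : PowerSeries ℚ_[p]) * g := by
  have hp0 : (p : ℚ_[p]) ≠ 0 := by exact_mod_cast hp.out.ne_zero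
  refine ⟨PowerSeries.C ((p : ℚ_[p])⁻¹) * (G - 1), ?_, ?_⟩
  · rw [mem_subA]
    intro k
    rw [coeff_C_mul, norm_mul, norm_inv, Padic.norm_p, inv_inv, map_sub, coeff_one]
    have hpr : (0 : ℝ) < p := by exact_mod_cast hp.out.pos
    by_cases hk : k = 0
    · simp [hk] at h0 ⊢
      simp [h0]; exact (DD_nonneg hw hC _).le
    · simp only [hk, if_false, sub_zero]
      have := mul_le_mul_of_nonneg_left (h k hk) hpr.le
      rwa [← mul_assoc, mul_inv_cancel₀ hpr.ne', one_mul] at this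
  · have : (p : PowerSeries ℚ_[p]) = PowerSeries.C (p : ℚ_[p]) := by simp
    rw [this, ← mul_assoc, ← map_mul, mul_inv_cancel₀ hp0]
    simp

lemma exp_factors (hwp : w ^ (p - 1) = (p : ℝ)⁻¹) (hCd : C = (p : ℝ) ^ 2 * w⁻¹) :
    ∃ g ∈ subA p w C hw hw1 hC hwC, (rescale (p : ℚ_[p]) (exp ℚ_[p]) *
      expand (p * p) (mul_ne_zero hp.out.ne_zero hp.out.ne_zero)
        (rescale (-(p : ℚ_[p])⁻¹) (exp ℚ_[p]))) = 1 + (p : PowerSeries ℚ_[p]) * g := by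
  have hpr : (1 : ℝ) ≤ p := by exact_mod_cast hp.out.one_le
  have hp2 := hp.out.two_le
  have hwi : 1 ≤ w⁻¹ := one_le_inv_iff₀.2 ⟨hw, hw1⟩
  have hwpi : (w⁻¹) ^ (p - 1) = p := by rw [inv_pow, hwp, inv_inv]
  have hwile : w⁻¹ ≤ p := by
    rw [← hwpi]
    exact le_self_pow₀ hwi (by omega)
  obtain ⟨g1, hg1, e1⟩ : ∃ g ∈ subA p w C hw hw1 hC hwC, rescale (p : ℚ_[p]) (exp ℚ_[p])
      = 1 + (p : PowerSeries ℚ_[p]) * g := by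
    apply exists_one_add
    · rw [coeff_rescale]; simp
    · intro k hk
      have h1 : ‖coeff k (rescale (p : ℚ_[p]) (exp ℚ_[p]))‖ ≤ ((p : ℝ)⁻¹) ^ k * (w⁻¹) ^ (k - 1) := by
        rw [coeff_rescale, norm_mul, norm_pow, Padic.norm_p, coeff_exp]
        gcongr
        simpa using norm_inv_factorial w hw hwp k hk
      refine h1.trans ?_
      have h2 : ((p : ℝ)⁻¹) ^ k * (w⁻¹) ^ (k - 1) ≤ (p : ℝ)⁻¹ := by
        obtain ⟨j, rfl⟩ := Nat.exists_eq_succ_of_ne_zero hk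
        simp only [Nat.succ_eq_add_one, Nat.add_sub_cancel]
        rw [pow_succ, mul_assoc, mul_comm (p : ℝ)⁻¹, ← mul_assoc, ← mul_pow]
        have : ((p : ℝ)⁻¹ * w⁻¹) ≤ 1 := by
          calc _ ≤ (p : ℝ)⁻¹ * p := by gcongr
            _ = 1 := inv_mul_cancel₀ (by positivity)
        calc _ ≤ 1 * (p : ℝ)⁻¹ := by
              gcongr
              exact pow_le_one₀ (by positivity) this
          _ = _ := one_mul _
      refine h2.trans ?_
      exact le_mul_of_one_le_right (by positivity) (DD_ge_one hw hC hwC _)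
  obtain ⟨g2, hg2, e2⟩ : ∃ g ∈ subA p w C hw hw1 hC hwC, expand (p * p) (mul_ne_zero hp.out.ne_zero hp.out.ne_zero)
        (rescale (-(p : ℚ_[p])⁻¹) (exp ℚ_[p]))
      = 1 + (p : PowerSeries ℚ_[p]) * g := by
    apply exists_one_add
    · rw [coeff_expand]
      simp only [dvd_zero, if_true, Nat.zero_div]
      rw [coeff_rescale]; simp
    · intro k hk
      rw [coeff_expand]
      split_ifs with hd
      swap
      · simp; exact mul_nonneg (by positivity) (DD_nonneg hw hC _).le
      rw [← pow_two] at hd ⊢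
      obtain ⟨m, rfl⟩ := hd
      have hpp : 0 < p ^ 2 := by positivity
      rw [Nat.mul_div_cancel_left _ hpp]
      have hm : m ≠ 0 := by rintro rfl; simp at hk
      have h1 : ‖coeff m (rescale (-(p : ℚ_[p])⁻¹) (exp ℚ_[p]))‖ ≤ (p : ℝ) ^ m * (w⁻¹) ^ (m - 1) := by
        rw [coeff_rescale, norm_mul, norm_pow, norm_neg, norm_inv, Padic.norm_p, coeff_exp, inv_inv]
        gcongr
        simpa using norm_inv_factorial w hw hwp m hm
      refine h1.trans ?_
      unfold DD
      rw [if_neg hm, hCd]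
      obtain ⟨j, rfl⟩ := Nat.exists_eq_succ_of_ne_zero hm
      simp only [Nat.succ_eq_add_one, Nat.add_sub_cancel]
      have h3 : (p : ℝ)⁻¹ * (w * ((p : ℝ) ^ 2 * w⁻¹) ^ (j + 1)) =
          ((p : ℝ) ^ (j + 1) * (w⁻¹) ^ j) * (p : ℝ) ^ j := by
        have : (p : ℝ) ≠ 0 := by positivity
        have hw0 : w ≠ 0 := hw.ne'
        rw [mul_pow, inv_pow, inv_pow]
        field_simp
        ring
      rw [h3]
      exact le_mul_of_one_le_right (by positivity) (one_le_pow₀ hpr)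
  refine ⟨g1 + g2 + p * (g1 * g2), ?_, ?_⟩
  · exact add_mem (add_mem hg1 hg2) (mul_mem (natCast_mem _ _) (mul_mem hg1 hg2))
  · rw [e1, e2]; ring

lemma eser_mem (hwp : w ^ (p - 1) = (p : ℝ)⁻¹) (hCd : C = (p : ℝ) ^ 2 * w⁻¹) :
    eser p ∈ subA p w C hw hw1 hC hwC := by
  have hp0 : (p : ℚ_[p]) ≠ 0 := by exact_mod_cast hp.out.ne_zero
  have hpr : (1 : ℝ) ≤ p := by exact_mod_cast hp.out.one_le
  have hpr0 : (0 : ℝ) < p := by linarith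
  have hp2 := hp.out.two_le
  have hwi : 1 ≤ w⁻¹ := one_le_inv_iff₀.2 ⟨hw, hw1⟩
  obtain ⟨g, hg, eG⟩ := exp_factors (hw := hw) (hw1 := hw1) (hC := hC) (hwC := hwC) (p := p) hwp hCd
  have hE := eser_eq p
  rw [eG] at hE
  set f := eser p with hf
  rw [mem_subA]
  intro k
  induction k using Nat.strong_induction_on with
  | _ k ih =>
  by_cases hk : k = 0
  · rw [hk, hf, constantCoeff_eser]; simp [DD]
  -- truncation
  set s : PowerSeries ℚ_[p] := ∑ j ∈ Finset.range k, monomial j (coeff j f) with hs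
  have hcs : ∀ i, coeff i s = if i < k then coeff i f else 0 := by
    intro i
    rw [hs, map_sum]
    simp only [coeff_monomial]
    rw [Finset.sum_ite_eq]
    simp
  obtain ⟨u, hu⟩ : (X : PowerSeries ℚ_[p]) ^ k ∣ f - s := by
    rw [X_pow_dvd_iff]
    intro m hm
    rw [map_sub, hcs, if_pos hm, sub_self]
  have hfu : f = s + X ^ k * u := by rw [← hu]; ring
  have hu0 : coeff k f = constantCoeff u := by
    rw [hfu, map_add, hcs, if_neg (lt_irrefl k), zero_add]
    simpa using coeff_X_pow_mul u k 0
  have hs0 : constantCoeff s = 1 := by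
    rw [← coeff_zero_eq_constantCoeff_apply, hcs, if_pos (by omega), constantCoeff_eser]
  obtain ⟨c, hc⟩ := Polynomial.powAddExpansion s (X ^ k * u) p
  have hLHS : coeff k (f ^ p) = coeff k (s ^ p) + p * coeff k f := by
    rw [hfu, hc, ← hfu, map_add, map_add]
    have e1 : coeff k (c * (X ^ k * u) ^ 2) = 0 := by
      rw [show c * (X ^ k * u) ^ 2 = X ^ (k + k) * (c * u ^ 2) by ring, coeff_X_pow_mul', if_neg (by omega)]
    have e2 : coeff k ((p : PowerSeries ℚ_[p]) * s ^ (p - 1) * (X ^ k * u)) = p * coeff k f := by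
      rw [show (p : PowerSeries ℚ_[p]) * s ^ (p - 1) * (X ^ k * u) = X ^ k * ((p : PowerSeries ℚ_[p]) * s ^ (p - 1) * u) by ring, coeff_X_pow_mul',
        if_pos le_rfl, Nat.sub_self, coeff_zero_eq_constantCoeff_apply, map_mul, map_mul, map_pow, hs0, hu0]
      simp
    rw [e1, e2, add_zero]
  have hRHS : coeff k (expand p hp.out.ne_zero f * (1 + (p : PowerSeries ℚ_[p]) * g)) =
      coeff k (expand p hp.out.ne_zero s * (1 + (p : PowerSeries ℚ_[p]) * g)) := by
    rw [hfu, map_add, map_mul (expand p hp.out.ne_zero), map_pow, expand_X, add_mul, map_add,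
      show (X ^ p) ^ k * expand p hp.out.ne_zero u * (1 + (p : PowerSeries ℚ_[p]) * g) = X ^ (p * k) * (expand p hp.out.ne_zero u * (1 + (p : PowerSeries ℚ_[p]) * g)) by
        rw [← pow_mul]; ring, coeff_X_pow_mul', if_neg (by nlinarith [Nat.pos_of_ne_zero hk]), add_zero]
  have hmon : ∀ j ∈ Finset.range k, monomial j (coeff j f) ∈ subA p w C hw hw1 hC hwC := by
    intro j hj
    exact monomial_mem_subA (ih j (Finset.mem_range.1 hj))
  let fs : ℕ → subA p w C hw hw1 hC hwC := fun j =>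
    if h : j ∈ Finset.range k then ⟨monomial j (coeff j f), hmon j h⟩ else 0
  obtain ⟨r, hr⟩ := sum_pow_prime (Finset.range k) fs p hp.out
  have hfs : ((∑ j ∈ Finset.range k, fs j : subA p w C hw hw1 hC hwC) : PowerSeries ℚ_[p]) = s := by
    rw [hs, AddSubmonoidClass.coe_finsetSum]
    apply Finset.sum_congr rfl
    intro j hj
    simp only [fs, dif_pos hj]
  have hfs2 : ((∑ j ∈ Finset.range k, fs j ^ p : subA p w C hw hw1 hC hwC) : PowerSeries ℚ_[p]) =
      ∑ j ∈ Finset.range k, monomial (p * j) (coeff j f ^ p) := by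
    rw [AddSubmonoidClass.coe_finsetSum]
    apply Finset.sum_congr rfl
    intro j hj
    simp only [fs, dif_pos hj, SubmonoidClass.coe_pow]
    rw [monomial_pow]
  have hr' := congrArg (Subtype.val) hr
  simp only [SubmonoidClass.coe_pow, hfs, Subring.coe_add, hfs2, Subring.coe_mul, Subring.coe_natCast] at hr'
  have hexs : expand p hp.out.ne_zero s = ∑ j ∈ Finset.range k, monomial (p * j) (coeff j f) := by
    rw [hs, map_sum]
    apply Finset.sum_congr rfl
    intro j hj
    rw [expand_monomial]
  have hdivle : ∀ j, j / p ^ 2 ≤ (p * j) / p ^ 2 := by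
    intro j
    exact Nat.div_le_div_right (Nat.le_mul_of_pos_left j hp.out.pos)
  have hexsm : expand p hp.out.ne_zero s ∈ subA p w C hw hw1 hC hwC := by
    rw [hexs]
    apply sum_mem
    intro j hj
    exact monomial_mem_subA ((ih j (Finset.mem_range.1 hj)).trans (DD_mono hw hC hwC (hdivle j)))
  let dd : PowerSeries ℚ_[p] := ∑ j ∈ Finset.range k, monomial (p * j) ((p : ℚ_[p])⁻¹ * (coeff j f - coeff j f ^ p))
  have hdd : (p : PowerSeries ℚ_[p]) * dd = expand p hp.out.ne_zero s - ∑ j ∈ Finset.range k, monomial (p * j) (coeff j f ^ p) := by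
    simp only [dd]
    rw [hexs, ← Finset.sum_sub_distrib, Finset.mul_sum]
    apply Finset.sum_congr rfl
    intro j hj
    have : (p : PowerSeries ℚ_[p]) = PowerSeries.C (p : ℚ_[p]) := by simp
    rw [this, ← map_sub, ← monomial_zero_eq_C_apply, monomial_mul_monomial, zero_add, ← mul_assoc, mul_inv_cancel₀ hp0, one_mul]
  have hddm : dd ∈ subA p w C hw hw1 hC hwC := by
    apply sum_mem
    intro j hj
    apply monomial_mem_subA
    rw [norm_mul, norm_inv, Padic.norm_p, inv_inv]
    rw [← le_inv_mul_iff₀ hpr0]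
    have ihj := ih j (Finset.mem_range.1 hj)
    by_cases hjp : j / p ^ 2 = 0
    · rw [hjp] at ihj
      simp only [DD, if_true] at ihj
      rw [norm_sub_rev]
      refine (padic_pow_sub _ ihj).trans ?_
      exact le_mul_of_one_le_right (by positivity) (DD_ge_one hw hC hwC _)
    · set m := j / p ^ 2 with hm
      have hm' : p * m ≤ p * j / p ^ 2 := by
        rw [Nat.le_div_iff_mul_le (by positivity)]
        have := Nat.div_mul_le_self j (p ^ 2)
        rw [← hm] at this
        nlinarith
      have hpm0 : p * m ≠ 0 := mul_ne_zero hp.out.ne_zero hjp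
      have key1 : DD w C m ^ p = (p : ℝ)⁻¹ * DD w C (p * m) := by
        unfold DD
        rw [if_neg hjp, if_neg hpm0, mul_pow, ← hwp, ← pow_mul, mul_comm m p]
        have : w ^ p = w ^ (p - 1) * w := by rw [← pow_succ]; congr 1; omega
        rw [this]; ring
      have hD1 := DD_ge_one hw hC hwC m
      rw [sub_eq_add_neg]
      refine (IsUltrametricDist.norm_add_le_max _ _).trans ?_
      rw [norm_neg]
      have hb2 : ‖coeff j f ^ p‖ ≤ (p : ℝ)⁻¹ * DD w C (p * j / p ^ 2) := by
        rw [norm_pow]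
        calc _ ≤ DD w C m ^ p := by gcongr
          _ = _ := key1
          _ ≤ _ := by
            gcongr
            exact DD_mono hw hC hwC hm'
      have hb1 : ‖coeff j f‖ ≤ (p : ℝ)⁻¹ * DD w C (p * j / p ^ 2) := by
        calc _ ≤ DD w C m := ihj
          _ ≤ DD w C m ^ p := le_self_pow₀ hD1 hp.out.ne_zero
          _ = _ := key1
          _ ≤ _ := by
            gcongr
            exact DD_mono hw hC hwC hm'
      exact max_le hb1 hb2
  -- conclude
  have hfin : (p : ℚ_[p]) * coeff k f = p * coeff k (dd + expand p hp.out.ne_zero s * g - (r : PowerSeries ℚ_[p])) := by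
    have h1 : coeff k (s ^ p) + p * coeff k f = coeff k (expand p hp.out.ne_zero s * (1 + (p : PowerSeries ℚ_[p]) * g)) := by
      rw [← hLHS, ← hRHS, hE]
    have h2 : expand p hp.out.ne_zero s * (1 + (p : PowerSeries ℚ_[p]) * g) - s ^ p =
        PowerSeries.C (p : ℚ_[p]) * (dd + expand p hp.out.ne_zero s * g - (r : PowerSeries ℚ_[p])) := by
      have : (p : PowerSeries ℚ_[p]) = PowerSeries.C (p : ℚ_[p]) := by simp
      rw [← this, hr']
      linear_combination (-1 : PowerSeries ℚ_[p]) * hdd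
    have h3 := congrArg (coeff k) h2
    rw [coeff_C_mul, map_sub] at h3
    linear_combination h1 + h3
  have hfin2 := mul_left_cancel₀ hp0 hfin
  rw [hfin2]
  exact (sub_mem (add_mem hddm (mul_mem hexsm hg)) r.2 : _ ∈ subA p w C hw hw1 hC hwC) k
end bound
end AHGp

namespace AHGp
open AHG

section dw
variable {p : ℕ} [hp : Fact p.Prime]
    {K : Type*} [NormedField K] [IsUltrametricDist K]
    (ι : ℚ_[p] →+* K) (hι : ∀ x, ‖ι x‖ = ‖x‖)
    (π : K) (hπ : π ^ (p - 1) = -(p : K))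

include hι in
lemma norm_natK (n : ℕ) : ‖(n : K)‖ = ‖(n : ℚ_[p])‖ := by
  rw [← hι, map_natCast]

include hι in
lemma norm_pK : ‖(p : K)‖ = (p : ℝ)⁻¹ := by
  rw [norm_natK ι hι, Padic.norm_p]

include hι hπ in
lemma norm_pi_pow : ‖π‖ ^ (p - 1) = (p : ℝ)⁻¹ := by
  rw [← norm_pow, hπ, norm_neg, norm_pK ι hι]

include hι hπ in
lemma norm_pi_pos : 0 < ‖π‖ := by
  rw [norm_pos_iff]
  rintro rfl
  have h := norm_pi_pow ι hι 0 hπ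
  have := hp.out.two_le
  rw [norm_zero, zero_pow (by omega)] at h
  have : (0 : ℝ) < (p : ℝ)⁻¹ := by have := hp.out.pos; positivity
  linarith

include hι hπ in
lemma norm_pi_lt : ‖π‖ < 1 := by
  by_contra hcon
  push Not at hcon
  have := one_le_pow₀ hcon (n := p - 1)
  rw [norm_pi_pow ι hι π hπ] at this
  have h4 : (1 : ℝ) < p := by exact_mod_cast hp.out.one_lt
  have := inv_lt_one_of_one_lt₀ h4
  linarith

include hπ in
lemma dworkB_eq (hp0 : (p : K) ≠ 0) (k : ℕ) : dworkB p π k = π ^ k * ι (PowerSeries.coeff k (eser p)) := by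
  rw [coeff_eser, map_sum, Finset.mul_sum]
  unfold dworkB
  apply Finset.sum_congr rfl
  intro j hj
  split_ifs with h
  · simp only [map_inv₀, map_mul, map_natCast, map_pow]
    have e : π ^ k = π ^ (k - p * j + j) * (-(p : K)) ^ j := by
      rw [← hπ, ← pow_mul, ← pow_add]
      congr 1
      have h1 : (p - 1) * j + j = p * j := by
        rw [← Nat.succ_mul, Nat.succ_eq_add_one, Nat.sub_add_cancel hp.out.one_le]
      omega
    rw [e, neg_pow (p : K) j]
    have : (p : K) ^ j ≠ 0 := pow_ne_zero _ hp0
    field_simp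
  · simp

include hι hπ in
lemma norm_dworkB_le (k : ℕ) : ‖dworkB p π k‖ ≤ ‖π‖ ^ k * (‖π‖⁻¹) ^ ((2 * p - 1) * (k / p ^ 2)) := by
  have hw := norm_pi_pos ι hι π hπ
  have hw1 := (norm_pi_lt ι hι π hπ).le
  have hwp := norm_pi_pow ι hι π hπ
  have hp2 := hp.out.two_le
  have hp0 : (p : K) ≠ 0 := by
    rw [← norm_ne_zero_iff, norm_pK ι hι]
    have := hp.out.pos
    positivity
  set w := ‖π‖ with hwdef
  have hwi : 1 ≤ w⁻¹ := one_le_inv_iff₀.2 ⟨hw, hw1⟩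
  have hpw : (p : ℝ) = (w⁻¹) ^ (p - 1) := by rw [inv_pow, hwp, inv_inv]
  have hCe : (p : ℝ) ^ 2 * w⁻¹ = (w⁻¹) ^ (2 * p - 1) := by
    rw [hpw, ← pow_mul, ← pow_succ]
    congr 1; omega
  have hC : 1 ≤ (p : ℝ) ^ 2 * w⁻¹ := by rw [hCe]; exact one_le_pow₀ hwi
  have hwC : 1 ≤ w * ((p : ℝ) ^ 2 * w⁻¹) := by
    have : w * ((p : ℝ) ^ 2 * w⁻¹) = (p : ℝ) ^ 2 := by field_simp
    rw [this]
    exact one_le_pow₀ (by exact_mod_cast hp.out.one_le)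
  have h := eser_mem (p := p) (hw := hw) (hw1 := hw1) (hC := hC) (hwC := hwC) hwp rfl k
  rw [dworkB_eq ι π hπ hp0, norm_mul, norm_pow, hι]
  gcongr
  refine h.trans ?_
  rw [pow_mul, ← hCe]
  unfold DD
  split_ifs with h0
  · rw [h0]; simp
  · exact mul_le_of_le_one_left (by positivity) hw1

lemma dworkB_small (k : ℕ) (hk : k < p) : dworkB p π k = π ^ k / (k.factorial : K) := by
  unfold dworkB
  rw [Finset.sum_eq_single 0]
  · simp
  · intro j _ hj
    rw [if_neg]
    have := Nat.le_mul_of_pos_right p (Nat.pos_of_ne_zero hj)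
    omega
  · simp

end dw

section lattice
variable {n N : ℕ} {a : Fin (N + 1) → Fin n → ℤ}

lemma hat_mem_cone (a : Fin (N + 1) → Fin n → ℤ) (j : Fin (N + 1)) : (fun i => (hat (a j) i : ℝ)) ∈ cone a := by
  refine ⟨fun k => if k = j then 1 else 0, ?_, ?_⟩
  · intro k; dsimp only; split_ifs <;> norm_num
  · simp

lemma cone_zero_nonneg {x : Fin (n + 1) → ℝ} (hx : x ∈ cone a) : 0 ≤ x 0 := by
  obtain ⟨t, ht, rfl⟩ := hx
  simp [hat]
  exact Finset.sum_nonneg (fun j _ => ht j)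

lemma Mint_pos {μ : Fin (n + 1) → ℤ} (h : μ ∈ latticeMint a) : 1 ≤ μ 0 := by
  by_contra hcon
  have h1 := h.2 (LinearMap.proj 0) (fun x hx => cone_zero_nonneg hx)
  have h0 := cone_zero_nonneg h.1.1
  have h2 : (0 : ℤ) ≤ μ 0 := by exact_mod_cast h0
  have h3 : μ 0 = 0 := by omega
  have h4 := h1 (by simp [h3]) _ (hat_mem_cone a 0)
  simp [hat] at h4

lemma Mint_one (hΔ : uniqueInteriorPoint a) {μ : Fin (n + 1) → ℤ} (h : μ ∈ latticeMint a)
    (h0 : μ 0 = 1) : μ = hat (a 0) := by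
  obtain ⟨hin, huniq⟩ := hΔ
  set Δ := convexHull ℝ (Set.range fun j : Fin N => fun i => (a j.succ i : ℝ)) with hΔd
  have key : (fun i : Fin n => ((μ i.succ : ℤ) : ℝ)) ∈ interior Δ := by
    by_contra hcon
    have hconv : Convex ℝ Δ := convex_convexHull _ _
    obtain ⟨f, hf⟩ := geometric_hahn_banach_open_point hconv.interior isOpen_interior hcon
    set v : Fin n → ℝ := (fun i : Fin n => ((μ i.succ : ℤ) : ℝ)) with hv
    have hle : ∀ x ∈ Δ, f x ≤ f v := by
      intro x hx
      have h1 : x ∈ closure (interior Δ) := by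
        rw [hconv.closure_interior_eq_closure_of_nonempty_interior ⟨_, hin⟩]
        exact subset_closure hx
      have h2 : closure (interior Δ) ⊆ {x | f x ≤ f v} :=
        closure_minimal (fun y hy => (hf y hy).le) (isClosed_le f.continuous continuous_const)
      exact h2 h1
    let ℓ : (Fin (n + 1) → ℝ) →ₗ[ℝ] ℝ :=
      f v • LinearMap.proj 0 - f.toLinearMap.comp (LinearMap.funLeft ℝ ℝ Fin.succ)
    have hℓ : ∀ x, ℓ x = f v * x 0 - f (fun i => x i.succ) := by
      intro x; rfl
    have hℓa : ∀ j, 0 ≤ ℓ (fun i => (hat (a j) i : ℝ)) := by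
      intro j
      rw [hℓ]
      simp only [hat, Fin.cons_zero, Fin.cons_succ, Int.cast_one, mul_one, sub_nonneg]
      refine Fin.cases ?_ (fun j => ?_) j
      · exact (hf _ hin).le
      · exact hle _ (subset_convexHull _ _ ⟨j, rfl⟩)
    have h1 := h.2 ℓ (by
      rintro x ⟨t, ht, rfl⟩
      rw [map_sum]
      apply Finset.sum_nonneg
      intro j _
      rw [map_smul]
      exact mul_nonneg (ht j) (hℓa j)) (by
      rw [hℓ]; simp [h0, hv]) _ (hat_mem_cone a 0)
    rw [hℓ] at h1
    simp only [hat, Fin.cons_zero, Fin.cons_succ, Int.cast_one, mul_one] at h1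
    have := hf _ hin
    linarith
  have h2 := huniq (fun i => μ i.succ) key
  funext i
  refine Fin.cases ?_ (fun j => ?_) i
  · simp [hat, h0]
  · simp [hat, ← h2]

end lattice

section coef
variable {p : ℕ} [hp : Fact p.Prime]
    {K : Type*} [NormedField K] [IsUltrametricDist K]
    (ι : ℚ_[p] →+* K) (hι : ∀ x, ‖ι x‖ = ‖x‖)
    (π : K) (hπ : π ^ (p - 1) = -(p : K))
    {n N : ℕ} {a : Fin (N + 1) → Fin n → ℤ}

include hι hπ in
lemma prod_dworkB_le {α : Type*} (s : Finset α) (k : α → ℕ) : ∃ m', m' * p ^ 2 ≤ ∑ i ∈ s, k i ∧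
    ‖∏ i ∈ s, dworkB p π (k i)‖ ≤ ‖π‖ ^ (∑ i ∈ s, k i) * (‖π‖⁻¹) ^ ((2 * p - 1) * m') := by
  refine ⟨∑ i ∈ s, k i / p ^ 2, ?_, ?_⟩
  · rw [Finset.sum_mul]
    exact Finset.sum_le_sum (fun i _ => Nat.div_mul_le_self _ _)
  · rw [norm_prod, ← Finset.prod_pow_eq_pow_sum, Finset.mul_sum, ← Finset.prod_pow_eq_pow_sum,
      ← Finset.prod_mul_distrib]
    exact Finset.prod_le_prod (fun i _ => norm_nonneg _) (fun i _ => norm_dworkB_le ι hι π hπ _)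

/-- numeric core -/
lemma numeric {w : ℝ} (hw : 0 < w) (hw1 : w ≤ 1) (hp3 : 3 ≤ p) (ρ ν : ℤ) (hρ : 1 ≤ ρ) (hν : 1 ≤ ν) (s m' : ℕ)
    (hs : (s : ℤ) = p * ν - ρ) (hm : m' * p ^ 2 ≤ s) :
    w ^ (ρ - ν) * (w ^ s * (w⁻¹) ^ ((2 * p - 1) * m')) ≤ w ^ (p - 1) ∧
    (2 ≤ ν → w ^ (ρ - ν) * (w ^ s * (w⁻¹) ^ ((2 * p - 1) * m')) ≤ w ^ p) := by
  have hp3' : (3 : ℤ) ≤ p := by exact_mod_cast hp3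
  have e : w ^ (ρ - ν) * (w ^ s * (w⁻¹) ^ ((2 * p - 1) * m')) = w ^ (((p : ℤ) - 1) * ν - (2 * p - 1) * m') := by
    rw [inv_pow, ← zpow_natCast w s, ← zpow_natCast w ((2 * p - 1) * m'), ← zpow_neg, ← zpow_add₀ hw.ne',
      ← zpow_add₀ hw.ne', hs]
    congr 1
    have : ((2 * p - 1 : ℕ) : ℤ) = 2 * p - 1 := by omega
    push_cast [this]
    ring
  have hm2 : (m' : ℤ) * p ^ 2 ≤ p * ν - ρ := by rw [← hs]; exact_mod_cast hm
  have mono : ∀ A B : ℤ, B ≤ A → w ^ A ≤ w ^ B := fun A B h => zpow_le_zpow_right_of_le_one₀ hw hw1 h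
  have key : (p : ℤ) - 1 ≤ ((p : ℤ) - 1) * ν - (2 * p - 1) * m' ∧
      (2 ≤ ν → (p : ℤ) ≤ ((p : ℤ) - 1) * ν - (2 * p - 1) * m') := by
    rcases Nat.eq_zero_or_pos m' with h | h
    · subst h
      constructor
      · simp; nlinarith
      · intro h2; simp; nlinarith
    · have hm1 : (1 : ℤ) ≤ m' := by exact_mod_cast h
      have hν' : (p : ℤ) * m' + 1 ≤ ν := by
        have : (p : ℤ) * (p * m') < p * ν := by nlinarith
        have := lt_of_mul_lt_mul_left this (by positivity)
        omega
      have h5 : (p : ℤ) ≤ ((p : ℤ) - 1) * ν - (2 * p - 1) * m' := by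
        have h6 : ((p : ℤ) - 1) * (p * m' + 1) ≤ (p - 1) * ν := by
          apply mul_le_mul_of_nonneg_left hν'; omega
        have h7 : (1 : ℤ) ≤ p ^ 2 - 3 * p + 1 := by nlinarith
        nlinarith
      exact ⟨by omega, fun _ => h5⟩
  rw [e]
  refine ⟨?_, fun h2 => ?_⟩
  · rw [← zpow_natCast w (p - 1)]
    apply mono
    have : ((p - 1 : ℕ) : ℤ) = p - 1 := by omega
    rw [this]; exact key.1
  · rw [← zpow_natCast w p]
    exact mono _ _ (key.2 h2)

include hι hπ in
lemma Bone_bound (hp3 : 3 ≤ p) (ρ ν : Fin (n + 1) → ℤ) (hρ : 1 ≤ ρ 0) (hν : 1 ≤ ν 0) (l : Fin N →₀ ℕ) :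
    ‖π ^ (ρ 0 - ν 0) * Bone p a π ((p : ℤ) • ν - ρ) l‖ ≤ ‖π‖ ^ (p - 1) ∧
    (2 ≤ ν 0 → ‖π ^ (ρ 0 - ν 0) * Bone p a π ((p : ℤ) • ν - ρ) l‖ ≤ ‖π‖ ^ p) := by
  have hw := norm_pi_pos ι hι π hπ
  have hw1 := (norm_pi_lt ι hι π hπ).le
  unfold Bone
  split_ifs with h
  swap
  · simp only [mul_zero, norm_zero]
    exact ⟨by positivity, fun _ => by positivity⟩
  obtain ⟨h1, h2⟩ := h
  obtain ⟨s0, hs0⟩ := Int.eq_ofNat_of_zero_le h1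
  rw [hs0]
  simp only [Int.toNat_natCast]
  let k : Fin (N + 1) → ℕ := Fin.cons s0 l
  have e : dworkB p π s0 * ∏ i : Fin N, dworkB p π (l i) = ∏ i, dworkB p π (k i) := by
    rw [Fin.prod_univ_succ]; rfl
  have e2 : ((∑ i, k i : ℕ) : ℤ) = p * ν 0 - ρ 0 := by
    rw [Fin.sum_univ_succ]
    simp only [k, Fin.cons_zero, Fin.cons_succ]
    push_cast
    rw [← hs0]
    simp
  rw [e]
  obtain ⟨m', hm1, hm2⟩ := prod_dworkB_le ι hι π hπ Finset.univ k
  have hnum := numeric (p := p) hw hw1 hp3 (ρ 0) (ν 0) hρ hν _ m' e2 hm1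
  rw [norm_mul, norm_zpow]
  have hz : 0 ≤ ‖π‖ ^ (ρ 0 - ν 0) := by positivity
  exact ⟨(mul_le_mul_of_nonneg_left hm2 hz).trans hnum.1,
    fun h => (mul_le_mul_of_nonneg_left hm2 hz).trans (hnum.2 h)⟩

end coef
end AHGp

namespace AHGp
open AHG
set_option linter.unusedSectionVars false

section rnorm
variable {N : ℕ} {K : Type*} [NormedField K]

def Bd (f : MvPowerSeries (Fin N) K) (c : ℝ) : Prop := ∀ ν : Fin N →₀ ℕ, ‖f ν‖ ≤ c

lemma Bd.nonneg {f : MvPowerSeries (Fin N) K} {c : ℝ} (h : Bd f c) : 0 ≤ c :=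
  (norm_nonneg _).trans (h 0)

lemma Bd.mono {f : MvPowerSeries (Fin N) K} {c d : ℝ} (h : Bd f c) (hcd : c ≤ d) : Bd f d :=
  fun ν => (h ν).trans hcd

lemma Bd.memR {f : MvPowerSeries (Fin N) K} {c : ℝ} (h : Bd f c) : memR f :=
  ⟨c, by rintro _ ⟨ν, rfl⟩; exact h ν⟩

lemma Bd.Rnorm_le {f : MvPowerSeries (Fin N) K} {c : ℝ} (h : Bd f c) : Rnorm f ≤ c :=
  ciSup_le h

lemma Bd_of_memR {f : MvPowerSeries (Fin N) K} (h : memR f) : Bd f (Rnorm f) :=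
  fun ν => le_ciSup h ν

lemma Bd.smul {f : MvPowerSeries (Fin N) K} {c : ℝ} (h : Bd f c) (k : K) : Bd (k • f) (‖k‖ * c) := by
  intro ν
  change ‖k * f ν‖ ≤ _
  rw [norm_mul]
  exact mul_le_mul_of_nonneg_left (h ν) (norm_nonneg _)

lemma Bd.neg {f : MvPowerSeries (Fin N) K} {c : ℝ} (h : Bd f c) : Bd (-f) c := by
  intro ν
  change ‖- f ν‖ ≤ _
  rw [norm_neg]; exact h ν

lemma Bd_eq_zero {f : MvPowerSeries (Fin N) K} (h : ∀ ε > 0, Bd f ε) : f = 0 := by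
  funext ν
  change f ν = 0
  rw [← norm_le_zero_iff]
  exact le_of_forall_pos_le_add fun ε hε => by simpa using h ε hε ν

variable [IsUltrametricDist K]

lemma Bd.add {f g : MvPowerSeries (Fin N) K} {c d : ℝ} (h : Bd f c) (h' : Bd g d) :
    Bd (f + g) (max c d) := fun ν =>
  (IsUltrametricDist.norm_add_le_max (f ν) (g ν)).trans (max_le_max (h ν) (h' ν))

lemma Bd.add_same {f g : MvPowerSeries (Fin N) K} {c : ℝ} (h : Bd f c) (h' : Bd g c) :
    Bd (f + g) c := (h.add h').mono (by simp)

lemma Bd.sub {f g : MvPowerSeries (Fin N) K} {c d : ℝ} (h : Bd f c) (h' : Bd g d) :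
    Bd (f - g) (max c d) := by
  rw [sub_eq_add_neg]; exact h.add h'.neg

lemma Bd.sub_same {f g : MvPowerSeries (Fin N) K} {c : ℝ} (h : Bd f c) (h' : Bd g c) :
    Bd (f - g) c := (h.sub h').mono (by simp)

lemma Bd.mul {f g : MvPowerSeries (Fin N) K} {c d : ℝ} (h : Bd f c) (h' : Bd g d) :
    Bd (f * g) (c * d) := by
  intro ν
  change ‖MvPowerSeries.coeff ν (f * g)‖ ≤ _
  rw [MvPowerSeries.coeff_mul]
  refine IsUltrametricDist.norm_sum_le_of_forall_le_of_nonneg (mul_nonneg h.nonneg h'.nonneg) ?_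
  intro x _
  rw [norm_mul]
  exact mul_le_mul (h _) (h' _) (norm_nonneg _) h.nonneg

lemma Bd.sum {ι' : Type*} {s : Finset ι'} {f : ι' → MvPowerSeries (Fin N) K} {c : ℝ} (hc : 0 ≤ c)
    (h : ∀ i ∈ s, Bd (f i) c) : Bd (∑ i ∈ s, f i) c := by
  intro ν
  change ‖MvPowerSeries.coeff ν (∑ i ∈ s, f i)‖ ≤ _
  rw [map_sum]
  exact IsUltrametricDist.norm_sum_le_of_forall_le_of_nonneg hc fun i hi => h i hi ν

lemma Bd_one : Bd (1 : MvPowerSeries (Fin N) K) 1 := by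
  intro ν
  change ‖MvPowerSeries.coeff ν 1‖ ≤ 1
  rw [MvPowerSeries.coeff_one]
  split_ifs <;> simp

lemma Bd_inv {f : MvPowerSeries (Fin N) K} (h0 : f 0 ≠ 0) (h : Bd f ‖f 0‖) : Bd f⁻¹ ‖f 0‖⁻¹ := by
  intro ν
  induction ν using WellFoundedLT.induction with
  | ind ν ih =>
    change ‖MvPowerSeries.coeff ν f⁻¹‖ ≤ _
    rw [MvPowerSeries.coeff_inv]
    split_ifs with hν
    · rw [norm_inv]; rfl
    · rw [norm_mul, norm_neg, norm_inv]
      change ‖f 0‖⁻¹ * _ ≤ _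
      have hp : 0 < ‖f 0‖ := norm_pos_iff.2 h0
      refine mul_le_of_le_one_right (by positivity) ?_
      refine IsUltrametricDist.norm_sum_le_of_forall_le_of_nonneg zero_le_one ?_
      intro x _
      split_ifs with hx
      · rw [norm_mul]
        calc _ ≤ ‖f 0‖ * ‖f 0‖⁻¹ := mul_le_mul (h _) (ih _ hx) (norm_nonneg _) (norm_nonneg _)
          _ = 1 := mul_inv_cancel₀ hp.ne'
      · simp

lemma mul_inv_self {f : MvPowerSeries (Fin N) K} (h0 : f 0 ≠ 0) : f * f⁻¹ = 1 :=
  MvPowerSeries.mul_inv_cancel f h0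

/-- a nonnegative function tending to zero has a lex-minimal maximizer -/
lemma exists_lexmax (F : (Fin N →₀ ℕ) → ℝ) (hF : ∀ ε > 0, {ν | ε ≤ F ν}.Finite) {ν0 : Fin N →₀ ℕ}
    (h0 : 0 < F ν0) : ∃ m, 0 < F m ∧ (∀ ν, F ν ≤ F m) ∧ ∀ ν, F ν = F m → toLex m ≤ toLex ν := by
  have fin := hF (F ν0) h0
  obtain ⟨m1, hm1, hmax⟩ := fin.toFinset.exists_max_image F ⟨ν0, by simp⟩
  have hm1' : F ν0 ≤ F m1 := by simpa using hm1
  have hall : ∀ ν, F ν ≤ F m1 := by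
    intro ν
    by_cases hν : F ν0 ≤ F ν
    · exact hmax ν (by simpa using hν)
    · push Not at hν
      exact hν.le.trans hm1'
  obtain ⟨m, hm, hmin⟩ := (hF (F m1) (h0.trans_le hm1')).toFinset.exists_min_image toLex ⟨m1, by simp⟩
  have hm' : F m1 ≤ F m := by simpa using hm
  have e : F m = F m1 := le_antisymm (hall m) hm'
  refine ⟨m, by linarith, fun ν => (hall ν).trans hm', fun ν hν => hmin ν ?_⟩
  simp [hν, e]

lemma fin_weight {f : MvPowerSeries (Fin N) K} {c : ℝ} (h : Bd f c) {r : ℝ} (hr0 : 0 < r) (hr1 : r < 1)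
    (ε : ℝ) (hε : 0 < ε) : {ν : Fin N →₀ ℕ | ε ≤ ‖f ν‖ * r ^ ν.degree}.Finite := by
  have hc : 0 < c + 1 := by have := h.nonneg; linarith
  obtain ⟨D, hD⟩ := exists_pow_lt_of_lt_one (div_pos hε hc) hr1
  refine (Finsupp.finite_of_degree_le (σ := Fin N) D).subset ?_
  intro ν hν
  simp only [Set.mem_ofPred_eq] at hν ⊢
  by_contra hcon
  push Not at hcon
  have h1 : r ^ ν.degree ≤ r ^ D := pow_le_pow_of_le_one hr0.le hr1.le hcon.le
  have h2 : ‖f ν‖ * r ^ ν.degree ≤ (c + 1) * r ^ D :=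
    mul_le_mul ((h ν).trans (by linarith)) h1 (by positivity) hc.le
  rw [lt_div_iff₀ hc] at hD
  linarith

lemma inv_Bd {f g : MvPowerSeries (Fin N) K} {c d : ℝ} (hf : Bd f c) (hg : Bd g d) (hfg : f * g = 1) :
    f 0 ≠ 0 ∧ Bd f ‖f 0‖ := by
  have h00 : f 0 * g 0 = 1 := by
    have := congrArg MvPowerSeries.constantCoeff hfg
    rw [map_mul, map_one] at this
    exact this
  have f0 : f 0 ≠ 0 := left_ne_zero_of_mul_eq_one h00
  have g0 : g 0 ≠ 0 := right_ne_zero_of_mul_eq_one h00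
  refine ⟨f0, ?_⟩
  have key : ∀ r : ℝ, 0 < r → r < 1 → ∀ ν, ‖f ν‖ * r ^ ν.degree ≤ ‖f 0‖ := by
    intro r hr0 hr1
    obtain ⟨i, hi0, hi1, hi2⟩ := exists_lexmax (fun ν => ‖f ν‖ * r ^ ν.degree) (fin_weight hf hr0 hr1) (ν0 := 0)
      (by simpa using f0)
    obtain ⟨j, hj0, hj1, hj2⟩ := exists_lexmax (fun ν => ‖g ν‖ * r ^ ν.degree) (fin_weight hg hr0 hr1) (ν0 := 0)
      (by simpa using g0)
    have dom := MvPowerSeries.antidiagonal_dominant (fun x : K => ‖x‖) f g i j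
      (fun x y => IsUltrametricDist.norm_add_le_max x y) (fun a b => norm_mul a b) (fun a => (norm_neg a).symm) (by
        intro q hq hne
        rw [Finset.HasAntidiagonal.mem_antidiagonal] at hq
        rw [norm_mul]
        by_contra hcon
        push Not at hcon
        change ‖f i‖ * ‖g j‖ ≤ ‖f q.1‖ * ‖g q.2‖ at hcon
        have hdeg : i.degree + j.degree = q.1.degree + q.2.degree := by
          rw [← map_add, ← map_add, hq]
        have a1 := hi1 q.1
        have a2 := hj1 q.2
        have hmul : (‖f i‖ * r ^ i.degree) * (‖g j‖ * r ^ j.degree) ≤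
            (‖f q.1‖ * r ^ q.1.degree) * (‖g q.2‖ * r ^ q.2.degree) := by
          have e1 : (‖f i‖ * r ^ i.degree) * (‖g j‖ * r ^ j.degree) = (‖f i‖ * ‖g j‖) * r ^ (i.degree + j.degree) := by ring
          have e2 : (‖f q.1‖ * r ^ q.1.degree) * (‖g q.2‖ * r ^ q.2.degree) = (‖f q.1‖ * ‖g q.2‖) * r ^ (q.1.degree + q.2.degree) := by ring
          rw [e1, e2, hdeg]
          exact mul_le_mul_of_nonneg_right hcon (by positivity)
        have E1 : ‖f q.1‖ * r ^ q.1.degree = ‖f i‖ * r ^ i.degree := by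
          refine le_antisymm a1 ?_
          by_contra hc
          push Not at hc
          have : 0 ≤ ‖f q.1‖ * r ^ q.1.degree := by positivity
          nlinarith
        have E2 : ‖g q.2‖ * r ^ q.2.degree = ‖g j‖ * r ^ j.degree := by
          refine le_antisymm a2 ?_
          by_contra hc
          push Not at hc
          have : 0 ≤ ‖g q.2‖ * r ^ q.2.degree := by positivity
          nlinarith
        have l1 := hi2 q.1 E1
        have l2 := hj2 q.2 E2
        have hs : toLex i + toLex j = toLex q.1 + toLex q.2 := by
          rw [← toLex_add, ← toLex_add, hq]
        have b1 : toLex i = toLex q.1 := by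
          refine le_antisymm l1 ?_
          by_contra hc
          push Not at hc
          exact absurd hs (add_lt_add_of_lt_of_le hc l2).ne
        have b2 : toLex j = toLex q.2 := by
          rw [b1] at hs
          exact add_left_cancel hs
        exact hne (Prod.ext (toLex.injective b1.symm) (toLex.injective b2.symm)))
    rw [hfg] at dom
    replace dom : ‖MvPowerSeries.coeff (i + j) (1 : MvPowerSeries (Fin N) K)‖ = ‖MvPowerSeries.coeff i f * MvPowerSeries.coeff j g‖ := dom
    have hne : ‖MvPowerSeries.coeff i f * MvPowerSeries.coeff j g‖ ≠ 0 := by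
      rw [norm_mul]
      change ‖f i‖ * ‖g j‖ ≠ 0
      have := pos_of_mul_pos_left hi0 (by positivity)
      have := pos_of_mul_pos_left hj0 (by positivity)
      positivity
    rw [← dom, MvPowerSeries.coeff_one] at hne
    have hij : i + j = 0 := by
      by_contra hc
      simp [hc] at hne
    have hi : i = 0 := by
      rw [add_eq_zero] at hij; exact hij.1
    subst hi
    intro ν
    simpa using hi1 ν
  intro ν
  have ht : Filter.Tendsto (fun r : ℝ => ‖f ν‖ * r ^ ν.degree) (nhdsWithin 1 (Set.Iio 1)) (nhds (‖f ν‖ * 1 ^ ν.degree)) := by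
    apply Filter.Tendsto.mono_left _ nhdsWithin_le_nhds
    exact (Continuous.tendsto (by fun_prop) 1)
  rw [one_pow, mul_one] at ht
  refine le_of_tendsto ht ?_
  have : Set.Ioo (0:ℝ) 1 ∈ nhdsWithin (1:ℝ) (Set.Iio 1) := Ioo_mem_nhdsLT (by norm_num)
  filter_upwards [this] with r hr
  exact key r hr.1 hr.2 ν

lemma Rnorm_of_Bd {f : MvPowerSeries (Fin N) K} (h : Bd f ‖f 0‖) : Rnorm f = ‖f 0‖ :=
  le_antisymm h.Rnorm_le (Bd_of_memR h.memR 0)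

lemma invR_iff {f : MvPowerSeries (Fin N) K} : invR f ↔ f 0 ≠ 0 ∧ Bd f ‖f 0‖ := by
  constructor
  · rintro ⟨h1, g, h2, h3⟩
    exact inv_Bd (Bd_of_memR h1) (Bd_of_memR h2) h3
  · rintro ⟨h0, h⟩
    exact ⟨h.memR, f⁻¹, (Bd_inv h0 h).memR, mul_inv_self h0⟩

lemma frobR_eq (p : ℕ) (hp : p ≠ 0) (f : MvPowerSeries (Fin N) K) : frobR p f = MvPowerSeries.expand p hp f := by
  funext ν
  change frobR p f ν = MvPowerSeries.coeff ν (MvPowerSeries.expand p hp f)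
  unfold frobR
  split_ifs with h
  · conv_rhs => rw [← h.choose_spec]
    rw [MvPowerSeries.coeff_expand_smul]
    rfl
  · have : ∃ i, ¬ p ∣ ν i := by
      by_contra hc
      push Not at hc
      refine h ⟨ν.mapRange (fun a => a / p) (by simp), ?_⟩
      ext i; simp [(Nat.mul_div_cancel' (hc i))]
    obtain ⟨i, hi⟩ := this
    rw [MvPowerSeries.coeff_expand_of_not_dvd p hp f hi]

lemma frobR_mul (p : ℕ) (hp : p ≠ 0) (f g : MvPowerSeries (Fin N) K) : frobR p (f * g) = frobR p f * frobR p g := by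
  rw [frobR_eq p hp, frobR_eq p hp, frobR_eq p hp, map_mul]

lemma Bd.frob {f : MvPowerSeries (Fin N) K} {c : ℝ} (h : Bd f c) (p : ℕ) : Bd (frobR p f) c := by
  intro ν
  unfold frobR
  split_ifs
  · exact h _
  · simpa using h.nonneg

lemma frobR_zero (p : ℕ) (hp : p ≠ 0) (f : MvPowerSeries (Fin N) K) : frobR p f 0 = f 0 := by
  rw [frobR_eq p hp]
  have := MvPowerSeries.coeff_expand_smul p hp f 0
  rw [smul_zero] at this
  exact this

end rnorm
end AHGp

namespace AHGp
open AHG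
set_option linter.unusedSectionVars false

lemma wilson_split (p : ℕ) [hp : Fact p.Prime] (m : ℕ) (hm : m ≤ p - 1) :
    ((m.factorial * (p - 1 - m).factorial : ℕ) : ZMod p) * (-1) ^ m = -1 := by
  induction m with
  | zero => simp [ZMod.wilsons_lemma p]
  | succ m ih =>
    have ih := ih (by omega)
    have e : p - 1 - m = (p - 1 - (m + 1)) + 1 := by omega
    have e2 : ((p - 1 - (m + 1) + 1 : ℕ) : ZMod p) = -((m + 1 : ℕ) : ZMod p) := by
      rw [eq_neg_iff_add_eq_zero, ← Nat.cast_add]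
      have : p - 1 - (m + 1) + 1 + (m + 1) = p := by omega
      rw [this]; simp
    rw [e, Nat.factorial_succ (p - 1 - (m + 1))] at ih
    refine Eq.trans ?_ ih
    rw [Nat.factorial_succ m]
    simp only [Nat.cast_mul]
    rw [e2]
    ring

section main1
variable {p : ℕ} [hp : Fact p.Prime] {K : Type*} [NormedField K] [IsUltrametricDist K]
    {n N : ℕ} {a : Fin (N + 1) → Fin n → ℤ}

lemma norm_fact_lt (ι : ℚ_[p] →+* K) (hι : ∀ x, ‖ι x‖ = ‖x‖) (k : ℕ) (hk : k < p) : ‖((k.factorial : ℕ) : K)‖ = 1 := by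
  rw [norm_natK ι hι, Padic.norm_natCast_eq_one_iff]
  exact (Nat.Prime.coprime_iff_not_dvd hp.out).2 (fun h => absurd ((Nat.Prime.dvd_factorial hp.out).1 h) (by omega))

lemma norm_int_le_one (z : ℤ) : ‖(z : K)‖ ≤ 1 := by
  exact IsUltrametricDist.norm_intCast_le_one K z

lemma hat_zero (v : Fin n → ℤ) : hat v 0 = 1 := rfl

lemma norm_int_dvd (ι : ℚ_[p] →+* K) (hι : ∀ x, ‖ι x‖ = ‖x‖) (z : ℤ) (hz : (p : ℤ) ∣ z) : ‖(z : K)‖ ≤ (p : ℝ)⁻¹ := by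
  obtain ⟨w, rfl⟩ := hz
  push_cast
  rw [norm_mul, norm_pK ι hι]
  have := norm_int_le_one (K := K) w
  have h0 : (0 : ℝ) ≤ (p : ℝ)⁻¹ := by positivity
  nlinarith

lemma cond_iff (l : Fin N →₀ ℕ) : (0 ≤ ((p : ℤ) • hat (a 0) - hat (a 0)) 0 - ∑ i : Fin N, (l i : ℤ) ∧
        (((p : ℤ) • hat (a 0) - hat (a 0)) 0 - ∑ i : Fin N, (l i : ℤ)) • hat (a 0) +
          ∑ i : Fin N, (l i : ℤ) • hat (a i.succ) = (p : ℤ) • hat (a 0) - hat (a 0)) ↔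
      ((fun i => l i) ∈ LplusSet a ∧ ∑ i : Fin N, l i ≤ p - 1) := by
  have h1 := hp.out.one_le
  have e0 : ((p : ℤ) • hat (a 0) - hat (a 0)) 0 = (p : ℤ) - 1 := by simp [hat_zero]
  rw [e0]
  have ec : ∑ i : Fin N, (l i : ℤ) = ((∑ i : Fin N, l i : ℕ) : ℤ) := by push_cast; rfl
  rw [ec, and_comm]
  refine and_congr ?_ (by omega)
  unfold LplusSet
  rw [Set.mem_ofPred_eq, sub_smul, sub_smul, one_smul]
  simp only [natCast_zsmul]
  constructor
  · intro h
    rw [sub_add_eq_add_sub, sub_eq_iff_eq_add] at h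
    exact add_left_cancel h
  · intro h
    rw [h]; abel

lemma Bone_main (ι : ℚ_[p] →+* K) (hι : ∀ x, ‖ι x‖ = ‖x‖) (π : K) (hπ : π ^ (p - 1) = -(p : K)) :
    Bd (Bone p a π ((p : ℤ) • hat (a 0) - hat (a 0)) - (p : K) • Phi1Series p a K) ((p : ℝ)⁻¹ * (p : ℝ)⁻¹) := by
  intro l
  change ‖Bone p a π ((p : ℤ) • hat (a 0) - hat (a 0)) l - (p : K) * Phi1Series p a K l‖ ≤ _
  unfold Bone Phi1Series
  simp only [cond_iff]
  have h1 := hp.out.one_le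
  split_ifs with h
  swap
  · simp only [mul_zero, sub_zero, norm_zero]; positivity
  obtain ⟨-, hs⟩ := h
  have e0 : ((p : ℤ) • hat (a 0) - hat (a 0)) 0 = (p : ℤ) - 1 := by simp [hat_zero]
  have ec : ∑ i : Fin N, (l i : ℤ) = ((∑ i : Fin N, l i : ℕ) : ℤ) := by push_cast; rfl
  have et : (((p : ℤ) • hat (a 0) - hat (a 0)) 0 - ∑ i : Fin N, (l i : ℤ)).toNat = p - 1 - ∑ i : Fin N, l i := by
    rw [e0, ec]; omega
  rw [et, dworkB_small π _ (by omega)]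
  have hle : ∀ i, l i ≤ ∑ i : Fin N, l i := fun i => Finset.single_le_sum (f := fun i => l i) (fun _ _ => Nat.zero_le _) (Finset.mem_univ i)
  rw [Finset.prod_congr rfl (fun i _ => dworkB_small π (l i) (by have := hle i; omega))]
  rw [Finset.prod_div_distrib, Finset.prod_pow_eq_pow_sum]
  set m := ∑ i : Fin N, l i with hm
  have hsp := Nat.multinomial_spec Finset.univ (fun i => l i)
  rw [← hm] at hsp
  have hspK : (∏ i : Fin N, ((l i).factorial : K)) * (Nat.multinomial Finset.univ (fun i => l i) : K) = (m.factorial : K) := by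
    rw [← hsp]; push_cast; rfl
  have nP : ‖∏ i : Fin N, ((l i).factorial : K)‖ = 1 := by
    rw [norm_prod]
    exact Finset.prod_eq_one fun i _ => norm_fact_lt ι hι _ (by have := hle i; omega)
  have nQ : ‖((p - 1 - m).factorial : K)‖ = 1 := norm_fact_lt ι hι _ (by omega)
  set P := ∏ i : Fin N, ((l i).factorial : K)
  set Q := ((p - 1 - m).factorial : K) with hQ
  have P0 : P ≠ 0 := by rw [← norm_ne_zero_iff, nP]; exact one_ne_zero
  have Q0 : Q ≠ 0 := by rw [← norm_ne_zero_iff, nQ]; exact one_ne_zero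
  have eM : (Nat.multinomial Finset.univ l : K) = m.factorial / P := by
    rw [eq_div_iff P0, mul_comm]; exact hspK
  rw [eM]
  have ePi : π ^ (p - 1 - m) * π ^ m = -(p : K) := by
    rw [← pow_add, Nat.sub_add_cancel hs, hπ]
  have : π ^ (p - 1 - m) / Q * (π ^ m / P) - (p : K) * ((-1) ^ m * (m.factorial / P)) =
      -(p : K) * (P⁻¹ * Q⁻¹) * ((1 + (m.factorial * (p - 1 - m).factorial : ℕ) * (-1) ^ m : ℤ) : K) := by
    push_cast
    rw [← hQ]
    field_simp
    rw [ePi]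
    ring
  rw [this, norm_mul, norm_mul, norm_mul, norm_neg, norm_inv, norm_inv, nP, nQ, norm_pK ι hι, inv_one, mul_one, mul_one]
  refine mul_le_mul_of_nonneg_left ?_ (by positivity)
  apply norm_int_dvd ι hι
  rw [← ZMod.intCast_zmod_eq_zero_iff_dvd]
  have := wilson_split p m hs
  push_cast at this ⊢
  rw [this]; ring

lemma Phi1_zero : Phi1Series p a K 0 = 1 := by
  unfold Phi1Series
  rw [if_pos]
  · have : Nat.multinomial (Finset.univ : Finset (Fin N)) ⇑(0 : Fin N →₀ ℕ) = 1 := by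
      simp [Nat.multinomial]
    rw [this]; simp
  · simp [LplusSet]

lemma Phi1_Bd : Bd (Phi1Series p a K) 1 := by
  intro l
  unfold Phi1Series
  split_ifs
  · rw [norm_mul, norm_pow, norm_neg, norm_one, one_pow, one_mul]
    have := norm_int_le_one (K := K) (Nat.multinomial Finset.univ l)
    simpa using this
  · simp

lemma base_mem : (p : ℤ) • hat (a 0) - hat (a 0) ∈ latticeM a := by
  have h1 := hp.out.one_le
  have e : (p : ℤ) • hat (a 0) - hat (a 0) = ((p : ℤ) - 1) • hat (a 0) := by rw [sub_smul, one_smul]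
  rw [e]
  refine ⟨⟨fun j => if j = 0 then (p : ℝ) - 1 else 0, ?_, ?_⟩, ?_⟩
  · intro j
    dsimp only
    split_ifs
    · have : (1 : ℝ) ≤ p := by exact_mod_cast h1
      linarith
    · rfl
  · funext i
    rw [Finset.sum_apply, Finset.sum_eq_single 0]
    · simp
    · intro b _ hb; simp [hb]
    · simp
  · exact AddSubgroup.zsmul_mem _ (AddSubgroup.subset_closure (Set.mem_range_self (0 : Fin (N + 1)))) _

lemma memS_Bd {ξ : Msub a → MvPowerSeries (Fin N) K} (hξ : memS a ξ) (μ : Msub a) : Bd (ξ μ) (Snorm a ξ) := by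
  obtain ⟨C, hC⟩ := hξ
  have hB : ∀ μ, Bd (ξ μ) C := fun μ ν => hC ⟨(μ, ν), rfl⟩
  intro ν
  refine (Bd_of_memR (hB μ).memR ν).trans ?_
  exact le_ciSup (f := fun μ => Rnorm (ξ μ)) ⟨C, by rintro _ ⟨μ, rfl⟩; exact (hB μ).Rnorm_le⟩ μ

lemma etaTerm_Bd (ι : ℚ_[p] →+* K) (hι : ∀ x, ‖ι x‖ = ‖x‖) (π : K) (hπ : π ^ (p - 1) = -(p : K))
    (hp3 : 3 ≤ p) {ξ : Msub a → MvPowerSeries (Fin N) K} {X : ℝ} (hξ : ∀ μ, Bd (ξ μ) X) (ρ ν : Msub a) :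
    Bd (etaTerm p a π ξ ρ.1 ν) (‖π‖ ^ (p - 1) * X) ∧ (2 ≤ ν.1 0 → Bd (etaTerm p a π ξ ρ.1 ν) (‖π‖ ^ p * X)) := by
  have hX : 0 ≤ X := (hξ ρ).nonneg
  unfold etaTerm
  split_ifs with h
  · rw [← smul_mul_assoc]
    have hb := fun l => Bone_bound (a := a) ι hι π hπ hp3 ρ.1 ν.1 (Mint_pos ρ.2) (Mint_pos ν.2) l
    refine ⟨Bd.mul (fun l => (hb l).1) ((hξ ν).frob p), fun h2 => Bd.mul (fun l => (hb l).2 h2) ((hξ ν).frob p)⟩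
  · constructor
    · intro l; change ‖(0 : K)‖ ≤ _; rw [norm_zero]; positivity
    · intro _ l; change ‖(0 : K)‖ ≤ _; rw [norm_zero]; positivity

lemma HasSumR_approx {ι' : Type*} {f : ι' → MvPowerSeries (Fin N) K} {g : MvPowerSeries (Fin N) K} {c d : ℝ}
    (hf : ∀ i, Bd (f i) c) (hc : 0 ≤ c) (hg : Bd g d) (h : HasSumR f g) (ε : ℝ) (hε : 0 < ε) :
    ∃ s0 : Finset ι', ∀ s, s0 ⊆ s → Bd (g - ∑ i ∈ s, f i) ε := by
  have := h.eventually (gt_mem_nhds hε)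
  rw [Filter.eventually_atTop] at this
  obtain ⟨s0, hs0⟩ := this
  refine ⟨s0, fun s hs => ?_⟩
  have hB : Bd (g - ∑ i ∈ s, f i) (max d c) := hg.sub (Bd.sum hc fun i _ => hf i)
  exact (Bd_of_memR hB.memR).mono (hs0 s hs).le

/-- the decomposition of `η_{â_0}` -/
lemma eta_main (hp3 : 3 ≤ p) (ι : ℚ_[p] →+* K) (hι : ∀ x, ‖ι x‖ = ‖x‖)
    (π : K) (hπ : π ^ (p - 1) = -(p : K)) (hΔ : uniqueInteriorPoint a)
    (μ0 : Msub a) (hμ0 : μ0.1 = hat (a 0))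
    (ξ : Msub a → MvPowerSeries (Fin N) K) (hξ : memS a ξ)
    (hinv : invR (ξ μ0)) (hn0 : Snorm a ξ = Rnorm (ξ μ0))
    (η : Msub a → MvPowerSeries (Fin N) K)
    (hη : ∀ ρ : Msub a, HasSumR (etaTerm p a π ξ ρ.1) (η ρ))
    (hηS : memS a η) :
    (∀ ρ, Bd (η ρ) ((p : ℝ)⁻¹ * Rnorm (ξ μ0))) ∧
    ∃ δ, Bd δ (‖π‖ ^ p * Rnorm (ξ μ0)) ∧ η μ0 = ((p : K) • Phi1Series p a K) * frobR p (ξ μ0) + δ := by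
  obtain ⟨h0, hB0⟩ := invR_iff.1 hinv
  have hX : 0 < Rnorm (ξ μ0) := by rw [Rnorm_of_Bd hB0]; exact norm_pos_iff.2 h0
  set X := Rnorm (ξ μ0) with hXdef
  have hξB : ∀ μ, Bd (ξ μ) X := fun μ => hn0 ▸ memS_Bd hξ μ
  have hpi := norm_pi_pos ι hι π hπ
  have hpil := norm_pi_lt ι hι π hπ
  have hpp := norm_pi_pow ι hι π hπ
  have hterm := fun ρ ν => etaTerm_Bd ι hι π hπ hp3 hξB ρ ν
  have hc : 0 < ‖π‖ ^ (p - 1) * X := by positivity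
  constructor
  · intro ρ
    obtain ⟨s, hs⟩ := HasSumR_approx (fun ν => (hterm ρ ν).1) hc.le (memS_Bd hηS ρ) (hη ρ) _ hc
    have := (hs s subset_rfl).add_same (Bd.sum (s := s) hc.le fun i _ => (hterm ρ i).1)
    rw [sub_add_cancel, hpp] at this
    exact this
  · have hc' : 0 < ‖π‖ ^ p * X := by positivity
    obtain ⟨s, hs⟩ := HasSumR_approx (fun ν => (hterm μ0 ν).1) hc.le (memS_Bd hηS μ0) (hη μ0) _ hc'
    have h1 := hs (insert μ0 s) (Finset.subset_insert _ _)
    have h2 : Bd (∑ i ∈ (insert μ0 s).erase μ0, etaTerm p a π ξ μ0.1 i) (‖π‖ ^ p * X) := by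
      refine Bd.sum hc'.le fun ν hν => (hterm μ0 ν).2 ?_
      have hne := Finset.ne_of_mem_erase hν
      have := Mint_pos ν.2
      by_contra hcon
      exact hne (Subtype.ext ((Mint_one hΔ ν.2 (by omega)).trans hμ0.symm))
    have e := Finset.sum_erase_add (insert μ0 s) (etaTerm p a π ξ μ0.1) (Finset.mem_insert_self μ0 s)
    have h3 : Bd ((Bone p a π ((p : ℤ) • hat (a 0) - hat (a 0)) - (p : K) • Phi1Series p a K) * frobR p (ξ μ0)) (‖π‖ ^ p * X) := by
      refine ((Bone_main ι hι π hπ).mul ((hξB μ0).frob p)).mono ?_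
      refine mul_le_mul_of_nonneg_right ?_ hX.le
      rw [← hpp, ← pow_add]
      exact pow_le_pow_of_le_one hpi.le hpil.le (by omega)
    refine ⟨_, (h1.add_same h2).add_same h3, ?_⟩
    have e2 : etaTerm p a π ξ μ0.1 μ0 = Bone p a π ((p : ℤ) • hat (a 0) - hat (a 0)) * frobR p (ξ μ0) := by
      unfold etaTerm
      rw [hμ0, if_pos base_mem, sub_self, zpow_zero, one_smul]
    rw [← e, e2]
    ring

lemma eta_zero (hp3 : 3 ≤ p) (ι : ℚ_[p] →+* K) (hι : ∀ x, ‖ι x‖ = ‖x‖)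
    (π : K) (hπ : π ^ (p - 1) = -(p : K)) (f η δ : MvPowerSeries (Fin N) K) (h0 : f 0 ≠ 0)
    (hδ : Bd δ (‖π‖ ^ p * ‖f 0‖)) (h : η = ((p : K) • Phi1Series p a K) * frobR p f + δ) :
    ‖η 0‖ = (p : ℝ)⁻¹ * ‖f 0‖ := by
  have hpi := norm_pi_pos ι hι π hπ
  have hpil := norm_pi_lt ι hι π hπ
  have hpp := norm_pi_pow ι hι π hπ
  have hX : 0 < ‖f 0‖ := norm_pos_iff.2 h0
  have e : η 0 = (p : K) * f 0 + δ 0 := by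
    have := congrArg MvPowerSeries.constantCoeff h
    rw [map_add, map_mul, MvPowerSeries.smul_eq_C_mul, map_mul, MvPowerSeries.constantCoeff_C] at this
    change η 0 = (p : K) * Phi1Series p a K 0 * frobR p f 0 + δ 0 at this
    rw [Phi1_zero, frobR_zero p hp.out.ne_zero, mul_one] at this
    exact this
  have n1 : ‖(p : K) * f 0‖ = (p : ℝ)⁻¹ * ‖f 0‖ := by rw [norm_mul, norm_pK ι hι]
  have n2 : ‖δ 0‖ < ‖(p : K) * f 0‖ := by
    refine (hδ 0).trans_lt ?_
    rw [n1, ← hpp]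
    refine mul_lt_mul_of_pos_right ?_ hX
    exact pow_lt_pow_right_of_lt_one₀ hpi hpil (by omega)
  rw [e, IsUltrametricDist.norm_add_eq_max_of_norm_ne_norm n2.ne', max_eq_left n2.le, n1]

end main1
end AHGp

namespace AHGp
open AHG
set_option linter.unusedSectionVars false

section poly
variable {N : ℕ} {K : Type*} [NormedField K] [IsUltrametricDist K]

/-- the monomial `y^ν` -/
def mon (y : Fin N → K) (ν : Fin N →₀ ℕ) : K := ∏ i, y i ^ ν i

lemma mon_add (y : Fin N → K) (ν μ : Fin N →₀ ℕ) : mon y (ν + μ) = mon y ν * mon y μ := by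
  simp [mon, pow_add, Finset.prod_mul_distrib]

lemma norm_mon_le {y : Fin N → K} {r : ℝ} (h : ∀ i, ‖y i‖ ≤ r) (ν : Fin N →₀ ℕ) :
    ‖mon y ν‖ ≤ r ^ ν.degree := by
  rw [mon, norm_prod, Finsupp.degree_eq_sum, ← Finset.prod_pow_eq_pow_sum]
  refine Finset.prod_le_prod (fun _ _ => norm_nonneg _) fun i _ => ?_
  rw [norm_pow]
  exact pow_le_pow_left₀ (norm_nonneg _) (h i) _

lemma norm_mon_le_one {y : Fin N → K} (h : ∀ i, ‖y i‖ ≤ 1) (ν : Fin N →₀ ℕ) :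
    ‖mon y ν‖ ≤ 1 := by simpa using norm_mon_le h ν

lemma eval_mon (y : Fin N → K) (P : MvPolynomial (Fin N) K) :
    MvPolynomial.eval y P = ∑ d ∈ P.support, P.coeff d * mon y d := MvPolynomial.eval_eq' y P

lemma poly_eval_le {y : Fin N → K} (h : ∀ i, ‖y i‖ ≤ 1) (P : MvPolynomial (Fin N) K) {c : ℝ} (hc : 0 ≤ c)
    (hP : ∀ ν, ‖P.coeff ν‖ ≤ c) : ‖MvPolynomial.eval y P‖ ≤ c := by
  rw [eval_mon]
  refine IsUltrametricDist.norm_sum_le_of_forall_le_of_nonneg hc fun ν _ => ?_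
  rw [norm_mul]
  calc _ ≤ c * 1 := mul_le_mul (hP ν) (norm_mon_le_one h ν) (norm_nonneg _) hc
    _ = c := mul_one c

lemma prod_diff {ι' : Type*} (s : Finset ι') (f g : ι' → K) {τ : ℝ} (hτ : 0 ≤ τ) (hf : ∀ i, ‖f i‖ ≤ 1) (hg : ∀ i, ‖g i‖ ≤ 1)
    (h : ∀ i, ‖f i - g i‖ ≤ τ) : ‖∏ i ∈ s, f i - ∏ i ∈ s, g i‖ ≤ τ := by
  induction s using Finset.induction_on with
  | empty => simpa using hτ
  | insert i s hi ih =>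
    rw [Finset.prod_insert hi, Finset.prod_insert hi]
    have e : f i * ∏ j ∈ s, f j - g i * ∏ j ∈ s, g j = f i * (∏ j ∈ s, f j - ∏ j ∈ s, g j) + (f i - g i) * ∏ j ∈ s, g j := by ring
    have hgp : ‖∏ j ∈ s, g j‖ ≤ 1 := by
      rw [norm_prod]; exact Finset.prod_le_one (fun _ _ => norm_nonneg _) fun i _ => hg i
    rw [e]
    refine (IsUltrametricDist.norm_add_le_max _ _).trans (max_le ?_ ?_)
    · rw [norm_mul]
      calc _ ≤ 1 * τ := mul_le_mul (hf i) ih (norm_nonneg _) zero_le_one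
        _ = τ := one_mul τ
    · rw [norm_mul]
      calc _ ≤ τ * 1 := mul_le_mul (h i) hgp (norm_nonneg _) hτ
        _ = τ := mul_one τ

lemma poly_diff {x y : Fin N → K} {τ : ℝ} (hτ : 0 ≤ τ) (hx : ∀ i, ‖x i‖ ≤ 1) (hy : ∀ i, ‖y i‖ ≤ 1) (h : ∀ i, ‖x i - y i‖ ≤ τ)
    (P : MvPolynomial (Fin N) K) (hP : ∀ ν, ‖P.coeff ν‖ ≤ 1) : ‖MvPolynomial.eval x P - MvPolynomial.eval y P‖ ≤ τ := by
  rw [eval_mon, eval_mon, ← Finset.sum_sub_distrib]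
  refine IsUltrametricDist.norm_sum_le_of_forall_le_of_nonneg hτ fun ν _ => ?_
  rw [← mul_sub, norm_mul]
  have h1 : ‖mon x ν - mon y ν‖ ≤ τ := by
    refine prod_diff _ _ _ hτ ?_ ?_ ?_
    · intro i; rw [norm_pow]; exact pow_le_one₀ (norm_nonneg _) (hx i)
    · intro i; rw [norm_pow]; exact pow_le_one₀ (norm_nonneg _) (hy i)
    · intro i
      have := prod_diff (Finset.range (ν i)) (fun _ => x i) (fun _ => y i) hτ (fun _ => hx i) (fun _ => hy i) (fun _ => h i)
      simpa using this
  calc _ ≤ 1 * τ := mul_le_mul (hP ν) h1 (norm_nonneg _) zero_le_one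
    _ = τ := one_mul τ

lemma geom_zero {x : K} {M : ℕ} (hx : x ^ M = 1) (h1 : x ≠ 1) : ∑ k ∈ Finset.range M, x ^ k = 0 := by
  have := mul_geom_sum x M
  rw [hx, sub_self] at this
  exact (mul_eq_zero.1 this).resolve_left (sub_ne_zero.2 h1)

variable [IsAlgClosed K] {p : ℕ} [hp : Fact p.Prime]

lemma poly_attain (ι : ℚ_[p] →+* K) (hι : ∀ x, ‖ι x‖ = ‖x‖) (P : MvPolynomial (Fin N) K) :
    ∃ z : Fin N → K, (∀ i, ‖z i‖ ≤ 1) ∧ ∀ ν, ‖P.coeff ν‖ ≤ ‖MvPolynomial.eval z P‖ := by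
  have : CharZero K := charZero_of_injective_ringHom ι.injective
  set M := p * (P.totalDegree + 1) + 1 with hM
  have hdeg : P.totalDegree < M := by
    have : 1 * (P.totalDegree + 1) ≤ p * (P.totalDegree + 1) := Nat.mul_le_mul_right _ hp.out.one_le
    omega
  have hnM : ‖(M : K)‖ = 1 := by
    rw [norm_natK ι hι, Padic.norm_natCast_eq_one_iff, hM]
    simp
  have : NeZero (M : K) := ⟨by rw [← norm_ne_zero_iff, hnM]; exact one_ne_zero⟩
  obtain ⟨ζ, hζ⟩ := HasEnoughRootsOfUnity.exists_primitiveRoot K M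
  have hζ1 : ‖ζ‖ = 1 := by
    have : ‖ζ‖ ^ M = 1 := by rw [← norm_pow, hζ.pow_eq_one, norm_one]
    exact (pow_eq_one_iff_of_nonneg (norm_nonneg _) (by omega)).1 this
  have hζ0 : ζ ≠ 0 := by rw [← norm_ne_zero_iff, hζ1]; exact one_ne_zero
  set S := Fintype.piFinset (fun _ : Fin N => Finset.range M) with hS
  have hSne : S.Nonempty := ⟨fun _ => 0, by simp [hS, hM]⟩
  let Z : (Fin N → ℕ) → Fin N → K := fun k i => ζ ^ k i
  obtain ⟨k0, hk0, hmax⟩ := S.exists_max_image (fun k => ‖MvPolynomial.eval (Z k) P‖) hSne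
  refine ⟨Z k0, fun i => by simp [Z, hζ1], fun ν => ?_⟩
  by_cases hν : ν ∈ P.support
  swap
  · rw [MvPolynomial.notMem_support_iff] at hν
    rw [hν, norm_zero]; positivity
  have hlt : ∀ μ ∈ P.support, ∀ i, μ i < M := by
    intro μ hμ i
    refine lt_of_le_of_lt ?_ hdeg
    refine le_trans ?_ (MvPolynomial.le_totalDegree hμ)
    exact Finsupp.le_degree i μ
  have key : ∑ k ∈ S, MvPolynomial.eval (Z k) P * ∏ i, (ζ⁻¹ ^ ν i) ^ k i = (M : K) ^ N * P.coeff ν := by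
    simp_rw [eval_mon, Finset.sum_mul]
    rw [Finset.sum_comm]
    have : ∀ μ ∈ P.support, ∑ k ∈ S, P.coeff μ * mon (Z k) μ * ∏ i, (ζ⁻¹ ^ ν i) ^ k i =
        if μ = ν then (M : K) ^ N * P.coeff ν else 0 := by
      intro μ hμ
      have e1 : ∀ k ∈ S, P.coeff μ * mon (Z k) μ * ∏ i, (ζ⁻¹ ^ ν i) ^ k i =
          P.coeff μ * ∏ i, (ζ ^ μ i * ζ⁻¹ ^ ν i) ^ k i := by
        intro k _
        rw [mul_assoc, mon, ← Finset.prod_mul_distrib]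
        congr 1
        refine Finset.prod_congr rfl fun i _ => ?_
        rw [mul_pow]
        congr 1
        simp only [Z]
        rw [← pow_mul, ← pow_mul, mul_comm]
      rw [Finset.sum_congr rfl e1, ← Finset.mul_sum, hS,
        Finset.sum_prod_piFinset (Finset.range M) (fun i k => (ζ ^ μ i * ζ⁻¹ ^ ν i) ^ k)]
      split_ifs with h
      · subst h
        have : ∀ i, ζ ^ μ i * ζ⁻¹ ^ μ i = 1 := fun i => by rw [← mul_pow, mul_inv_cancel₀ hζ0, one_pow]
        simp_rw [this]
        simp [mul_comm]
      · have : ∃ i, μ i ≠ ν i := by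
          by_contra hc
          push Not at hc
          exact h (Finsupp.ext hc)
        obtain ⟨i, hi⟩ := this
        rw [Finset.prod_eq_zero (Finset.mem_univ i), mul_zero]
        apply geom_zero
        · have hM1 := hζ.pow_eq_one
          rw [mul_pow, ← pow_mul, ← pow_mul, mul_comm (μ i), mul_comm (ν i), pow_mul, pow_mul, inv_pow, hM1]
          simp
        · intro hc
          rw [inv_pow, mul_inv_eq_one₀ (pow_ne_zero _ hζ0)] at hc
          exact hi (hζ.pow_inj (hlt μ hμ i) (hlt ν hν i) hc)
    rw [Finset.sum_congr rfl this, Finset.sum_ite_eq' , if_pos hν]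
  have : ‖(M : K) ^ N * P.coeff ν‖ ≤ ‖MvPolynomial.eval (Z k0) P‖ := by
    rw [← key]
    refine IsUltrametricDist.norm_sum_le_of_forall_le_of_nonneg (norm_nonneg _) fun k hk => ?_
    rw [norm_mul, norm_prod]
    have : ∏ i, ‖(ζ⁻¹ ^ ν i) ^ k i‖ = 1 := Finset.prod_eq_one fun i _ => by simp [hζ1]
    rw [this, mul_one]
    exact hmax k hk
  rwa [norm_mul, norm_pow, hnM, one_pow, one_mul] at this

/-- the analytic domain -/
def YY (Φ : MvPolynomial (Fin N) K) : Set (Fin N → K) :=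
  {y | (∀ i, ‖y i‖ ≤ 1) ∧ ‖MvPolynomial.eval y Φ‖ = 1}

lemma nonvanish (ι : ℚ_[p] →+* K) (hι : ∀ x, ‖ι x‖ = ‖x‖) {Φ : MvPolynomial (Fin N) K} (hΦ : ∀ ν, ‖Φ.coeff ν‖ ≤ 1)
    (r : MvPolynomial (Fin N) K) (hr : ∀ y ∈ YY Φ, MvPolynomial.eval y r ≠ 0) {y : Fin N → K} (hy : y ∈ YY Φ)
    (ν : Fin N →₀ ℕ) : ‖r.coeff ν‖ ≤ ‖MvPolynomial.eval y r‖ := by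
  by_contra hcon
  push Not at hcon
  obtain ⟨w, hw, hwr⟩ := poly_attain ι hι r
  have hlt : ‖MvPolynomial.eval y r‖ < ‖MvPolynomial.eval w r‖ := hcon.trans_le (hwr ν)
  set h : Polynomial K := MvPolynomial.aeval (fun i => Polynomial.C (y i) + Polynomial.X * Polynomial.C (w i - y i)) r with hh
  have hev : ∀ t : K, h.eval t = MvPolynomial.eval (fun i => y i + t * (w i - y i)) r := by
    intro t
    rw [hh, MvPolynomial.aeval_def, ← Polynomial.coe_evalRingHom, MvPolynomial.hom_eval₂]
    rw [MvPolynomial.eval, MvPolynomial.coe_eval₂Hom]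
    congr 1
    · ext x; simp
    · funext i; simp
  have h0 : h.eval 0 = MvPolynomial.eval y r := by rw [hev]; simp
  have h1 : h.eval 1 = MvPolynomial.eval w r := by rw [hev]; simp
  have hne : MvPolynomial.eval y r ≠ 0 := hr y hy
  have hsp : h.Splits := IsAlgClosed.splits h
  have hfac : ∀ t, ‖h.eval t‖ = ‖h.leadingCoeff‖ * (h.roots.map (fun α => ‖t - α‖)).prod := by
    intro t
    conv_lhs => rw [hsp.eq_prod_roots]
    rw [Polynomial.eval_mul, Polynomial.eval_C, norm_mul, Polynomial.eval_multiset_prod, Multiset.map_map]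
    congr 1
    have := map_multiset_prod (normHom : K →*₀ ℝ) (h.roots.map ((Polynomial.eval t) ∘ fun a => Polynomial.X - Polynomial.C a))
    rw [Multiset.map_map] at this
    refine this.trans ?_
    congr 1
    refine Multiset.map_congr rfl fun α _ => ?_
    simp
  have hroot : ∃ α ∈ h.roots, ‖α‖ < 1 := by
    by_contra hc
    push Not at hc
    have : ‖h.eval 1‖ ≤ ‖h.eval 0‖ := by
      rw [hfac, hfac]
      refine mul_le_mul_of_nonneg_left ?_ (norm_nonneg _)
      refine Multiset.prod_map_le_prod_map₀ _ _ (fun _ _ => norm_nonneg _) fun α hα => ?_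
      rw [zero_sub, sub_eq_add_neg]
      refine (IsUltrametricDist.norm_add_le_max _ _).trans (max_le ?_ le_rfl)
      rw [norm_one, norm_neg]; exact hc α hα
    rw [h0, h1] at this
    linarith
  obtain ⟨α, hα, hα1⟩ := hroot
  have hα0 : h.eval α = 0 := (Polynomial.mem_roots'.1 hα).2
  rw [hev] at hα0
  have hd : ∀ i, ‖α * (w i - y i)‖ ≤ ‖α‖ := by
    intro i
    rw [norm_mul]
    refine mul_le_of_le_one_right (norm_nonneg _) ?_
    rw [sub_eq_add_neg]
    exact (IsUltrametricDist.norm_add_le_max _ _).trans (max_le (hw i) (by rw [norm_neg]; exact hy.1 i))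
  have hy' : ∀ i, ‖y i + α * (w i - y i)‖ ≤ 1 := fun i =>
    (IsUltrametricDist.norm_add_le_max _ _).trans (max_le (hy.1 i) ((hd i).trans hα1.le))
  refine hr (fun i => y i + α * (w i - y i)) ⟨hy', ?_⟩ hα0
  have hdiff := poly_diff (norm_nonneg α) hy' hy.1 (fun i => by simpa using hd i) Φ hΦ
  set A := MvPolynomial.eval (fun i => y i + α * (w i - y i)) Φ
  have e : A = (A - MvPolynomial.eval y Φ) + MvPolynomial.eval y Φ := by ring
  have hlt2 : ‖A - MvPolynomial.eval y Φ‖ < ‖MvPolynomial.eval y Φ‖ := by rw [hy.2]; linarith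
  rw [e, IsUltrametricDist.norm_add_eq_max_of_norm_ne_norm hlt2.ne, max_eq_right hlt2.le, hy.2]

end poly
end AHGp

namespace AHGp
open AHG
set_option linter.unusedSectionVars false

section ev
variable {N : ℕ} {K : Type*} [NormedField K] [IsUltrametricDist K]

/-- the power series `c` sums to `A` at `y` -/
def Ev (y : Fin N → K) (c : MvPowerSeries (Fin N) K) (A : K) : Prop :=
  HasSum (fun ν : Fin N →₀ ℕ => c ν * mon y ν) A

lemma Ev.sub {y : Fin N → K} {c d : MvPowerSeries (Fin N) K} {A B : K} (h : Ev y c A) (h' : Ev y d B) : Ev y (c - d) (A - B) := by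
  have := HasSum.sub h h'
  simp_rw [← sub_mul] at this
  exact this

lemma Ev.add {y : Fin N → K} {c d : MvPowerSeries (Fin N) K} {A B : K} (h : Ev y c A) (h' : Ev y d B) : Ev y (c + d) (A + B) := by
  have := HasSum.add h h'
  simp_rw [← add_mul] at this
  exact this

lemma hasSum_norm_le {ι' : Type*} {f : ι' → K} {A : K} (h : HasSum f A) (s : Finset ι') {ε : ℝ} (hε : 0 ≤ ε)
    (hf : ∀ i, i ∉ s → ‖f i‖ ≤ ε) : ‖A - ∑ i ∈ s, f i‖ ≤ ε := by
  have h1 : Filter.Tendsto (fun t : Finset ι' => ‖∑ i ∈ t, f i - ∑ i ∈ s, f i‖) Filter.atTop (nhds ‖A - ∑ i ∈ s, f i‖) :=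
    (Filter.Tendsto.sub_const h _).norm
  refine le_of_tendsto h1 ?_
  filter_upwards [Filter.eventually_ge_atTop s] with t ht
  rw [← Finset.sum_sdiff ht, add_sub_cancel_right]
  exact IsUltrametricDist.norm_sum_le_of_forall_le_of_nonneg hε fun i hi => hf i (Finset.mem_sdiff.1 hi).2

lemma Ev.norm_le {y : Fin N → K} (hy : ∀ i, ‖y i‖ ≤ 1) {c : MvPowerSeries (Fin N) K} {A : K} (h : Ev y c A) {ε : ℝ} (hc : Bd c ε) : ‖A‖ ≤ ε := by
  have := hasSum_norm_le h ∅ hc.nonneg (fun ν _ => by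
    rw [norm_mul]
    calc _ ≤ ε * 1 := mul_le_mul (hc ν) (norm_mon_le_one hy ν) (norm_nonneg _) hc.nonneg
      _ = ε := mul_one ε)
  simpa using this

lemma Ev_X_mul {y : Fin N → K} {c : MvPowerSeries (Fin N) K} {A : K} (h : Ev y c A) (i : Fin N) :
    Ev y (MvPowerSeries.X i * c) (y i * A) := by
  unfold Ev
  have hinj : Function.Injective (fun ν : Fin N →₀ ℕ => Finsupp.single i 1 + ν) := add_right_injective _
  rw [← hinj.hasSum_iff]
  · have := HasSum.mul_left (y i) h
    refine this.congr_fun ?_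
    intro ν
    change MvPowerSeries.coeff (Finsupp.single i 1 + ν) (MvPowerSeries.monomial (Finsupp.single i 1) 1 * c) * _ = _
    rw [MvPowerSeries.coeff_add_monomial_mul, mon_add, one_mul]
    have : mon y (Finsupp.single i 1) = y i := by
      rw [mon, Finset.prod_eq_single i]
      · simp
      · intro j _ hj; simp [hj.symm]
      · simp
    rw [this]
    change c ν * _ = _
    ring
  · intro ν hν
    change MvPowerSeries.coeff ν (MvPowerSeries.monomial (Finsupp.single i 1) 1 * c) * _ = _
    rw [MvPowerSeries.coeff_monomial_mul, if_neg, zero_mul]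
    intro hle
    exact hν ⟨ν - Finsupp.single i 1, add_tsub_cancel_of_le hle⟩

lemma Ev_poly_mul {y : Fin N → K} (P : MvPolynomial (Fin N) K) : ∀ {c : MvPowerSeries (Fin N) K} {A : K}, Ev y c A →
    Ev y ((P : MvPowerSeries (Fin N) K) * c) (MvPolynomial.eval y P * A) := by
  induction P using MvPolynomial.induction_on with
  | C k =>
    intro c A h
    rw [MvPolynomial.coe_C, MvPolynomial.eval_C, ← MvPowerSeries.smul_eq_C_mul]
    refine (HasSum.mul_left k h).congr_fun ?_
    intro ν
    change k * c ν * _ = _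
    ring
  | add P Q hP hQ =>
    intro c A h
    rw [MvPolynomial.coe_add, add_mul, map_add, add_mul]
    exact (hP h).add (hQ h)
  | mul_X P i hP =>
    intro c A h
    rw [MvPolynomial.coe_mul, MvPolynomial.coe_X, map_mul, MvPolynomial.eval_X, mul_assoc, mul_assoc]
    exact hP (Ev_X_mul h i)

lemma Ev_one (y : Fin N → K) : Ev y 1 1 := by
  have h := hasSum_single (f := fun ν : Fin N →₀ ℕ => MvPowerSeries.coeff ν (1 : MvPowerSeries (Fin N) K) * mon y ν) 0 (by
    intro ν hν
    rw [MvPowerSeries.coeff_one, if_neg hν, zero_mul])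
  have e : MvPowerSeries.coeff 0 (1 : MvPowerSeries (Fin N) K) * mon y 0 = 1 := by
    rw [MvPowerSeries.coeff_one]; simp [mon]
  rw [e] at h
  exact h

lemma Ev_poly (y : Fin N → K) (P : MvPolynomial (Fin N) K) : Ev y (P : MvPowerSeries (Fin N) K) (MvPolynomial.eval y P) := by
  simpa using Ev_poly_mul P (Ev_one y)

lemma Ev_exists [CompleteSpace K] {y : Fin N → K} (hy : ∀ i, ‖y i‖ < 1) {c : MvPowerSeries (Fin N) K} {d : ℝ} (hc : Bd c d) :
    ∃ A, Ev y c A := by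
  have : ∃ r : ℝ, 0 < r ∧ r < 1 ∧ ∀ i, ‖y i‖ ≤ r := by
    by_cases hN : Nonempty (Fin N)
    · obtain ⟨i, hi⟩ := Finite.exists_max (fun i => ‖y i‖)
      exact ⟨(‖y i‖ + 1) / 2, by have := norm_nonneg (y i); linarith, by have := hy i; linarith,
        fun j => by have := hi j; have := hy i; linarith⟩
    · exact ⟨1 / 2, by norm_num, by norm_num, fun i => absurd ⟨i⟩ hN⟩
  obtain ⟨r, hr0, hr1, hr⟩ := this
  refine (NonarchimedeanAddGroup.summable_iff_tendsto_cofinite_zero _).2 ?_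
  rw [tendsto_zero_iff_norm_tendsto_zero, Metric.tendsto_nhds]
  intro ε hε
  rw [Filter.eventually_cofinite]
  refine (fin_weight hc hr0 hr1 ε hε).subset ?_
  intro ν hν
  simp only [Set.mem_ofPred_eq, dist_zero_right, norm_norm, not_lt] at hν ⊢
  refine hν.trans ?_
  rw [norm_mul]
  exact mul_le_mul_of_nonneg_left (norm_mon_le hr ν) (norm_nonneg _)

variable [IsAlgClosed K] {p : ℕ} [hp : Fact p.Prime]

lemma cauchy_est (ι : ℚ_[p] →+* K) (hι : ∀ x, ‖ι x‖ = ‖x‖) {c : MvPowerSeries (Fin N) K} {ε : ℝ} (hε : 0 < ε)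
    (h : ∀ y : Fin N → K, (∀ i, ‖y i‖ < 1) → ∃ A, Ev y c A ∧ ‖A‖ ≤ ε) : Bd c ε := by
  have key : ∀ s : K, ‖s‖ < 1 → ∀ ν, ‖c ν * s ^ ν.degree‖ ≤ ε := by
    intro s hs ν
    by_contra hcon
    push Not at hcon
    have hmons : ∀ z : Fin N → K, ∀ μ, mon (fun i => s * z i) μ = s ^ μ.degree * mon z μ := by
      intro z μ
      rw [mon, mon, Finsupp.degree_eq_sum, ← Finset.prod_pow_eq_pow_sum, ← Finset.prod_mul_distrib]
      exact Finset.prod_congr rfl fun i _ => mul_pow _ _ _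
    have hT : {μ : Fin N →₀ ℕ | ε < ‖c μ * s ^ μ.degree‖}.Finite := by
      obtain ⟨A, hA, -⟩ := h (fun _ => s * 1) (fun _ => by simpa using hs)
      have := hA.summable.tendsto_cofinite_zero
      rw [tendsto_zero_iff_norm_tendsto_zero, Metric.tendsto_nhds] at this
      have := this ε hε
      rw [Filter.eventually_cofinite] at this
      refine this.subset ?_
      intro μ hμ
      simp only [Set.mem_ofPred_eq, dist_zero_right, norm_norm, not_lt] at hμ ⊢
      rw [hmons (fun _ => 1)]
      simpa [mon] using hμ.le
    set T := hT.toFinset with hTdef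
    set P : MvPolynomial (Fin N) K := ∑ μ ∈ T, MvPolynomial.monomial μ (c μ * s ^ μ.degree) with hP
    obtain ⟨z, hz, hzP⟩ := poly_attain ι hι P
    have hcoef : P.coeff ν = c ν * s ^ ν.degree := by
      rw [hP, MvPolynomial.coeff_sum]
      simp_rw [MvPolynomial.coeff_monomial]
      rw [Finset.sum_ite_eq', if_pos]
      simpa [hTdef] using hcon
    obtain ⟨A, hA, hAε⟩ := h (fun i => s * z i) (fun i => by
      rw [norm_mul]
      calc _ ≤ ‖s‖ * 1 := mul_le_mul_of_nonneg_left (hz i) (norm_nonneg _)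
        _ < 1 := by linarith)
    have hsum := hasSum_norm_le hA T hε.le (fun μ hμ => by
      have hμ' : ‖c μ * s ^ μ.degree‖ ≤ ε := by
        by_contra hc; push Not at hc
        exact hμ (by simpa [hTdef] using hc)
      rw [hmons, ← mul_assoc, norm_mul]
      calc _ ≤ ε * 1 := mul_le_mul hμ' (norm_mon_le_one hz μ) (norm_nonneg _) hε.le
        _ = ε := mul_one ε)
    have hPe : MvPolynomial.eval z P = ∑ μ ∈ T, c μ * mon (fun i => s * z i) μ := by
      rw [hP, map_sum]
      refine Finset.sum_congr rfl fun μ _ => ?_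
      rw [MvPolynomial.eval_monomial, hmons, ← mul_assoc, mon, Finsupp.prod_fintype]
      intro i; exact pow_zero _
    have h3 := hzP ν
    rw [hcoef, hPe] at h3
    set B := ∑ μ ∈ T, c μ * mon (fun i => s * z i) μ
    have e : B = A + -(A - B) := by ring
    have h4 : ‖B‖ ≤ ε := by
      rw [e]
      exact (IsUltrametricDist.norm_add_le_max _ _).trans (max_le hAε (by rw [norm_neg]; exact hsum))
    linarith
  intro ν
  by_contra hcon
  push Not at hcon
  have hp1 : (1 : ℝ) < p := by exact_mod_cast hp.out.one_lt
  obtain ⟨k, hk⟩ := pow_unbounded_of_one_lt ((p : ℝ) ^ ν.degree) ((one_lt_div hε).2 hcon)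
  have hk' : (p : ℝ) ^ ν.degree < (‖c ν‖ / ε) ^ (k + 1) := by
    refine hk.trans_le ?_
    exact pow_le_pow_right₀ ((one_lt_div hε).2 hcon).le (Nat.le_succ k)
  obtain ⟨s, hs⟩ := IsAlgClosed.exists_pow_nat_eq (p : K) (Nat.succ_pos k)
  have hsn : ‖s‖ ^ (k + 1) = (p : ℝ)⁻¹ := by rw [← norm_pow, hs, norm_pK ι hι]
  have hs1 : ‖s‖ < 1 := by
    by_contra hc; push Not at hc
    have := one_le_pow₀ hc (n := k + 1)
    rw [hsn] at this
    have := inv_lt_one_of_one_lt₀ hp1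
    linarith
  have h1 := key s hs1 ν
  have h2 := pow_le_pow_left₀ (norm_nonneg _) h1 (k + 1)
  rw [norm_mul, norm_pow, mul_pow, ← pow_mul, mul_comm ν.degree, pow_mul, hsn, inv_pow] at h2
  rw [div_pow, lt_div_iff₀ (by positivity)] at hk'
  rw [← div_eq_mul_inv, div_le_iff₀ (by positivity)] at h2
  linarith

end ev
end AHGp

namespace AHGp
open AHG
set_option linter.unusedSectionVars false

section rat
variable {N : ℕ} {K : Type*} [NormedField K] [IsUltrametricDist K]

/-- `w` is the expansion of the rational function `q / r`, with `r` nonvanishing on `YY Φ`. -/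
def RatRep (Φ q r : MvPolynomial (Fin N) K) (w : MvPowerSeries (Fin N) K) : Prop :=
  (∀ y ∈ YY Φ, MvPolynomial.eval y r ≠ 0) ∧ (r : MvPowerSeries (Fin N) K) * w = q

/-- closure of rational functions -/
def Cl (Φ : MvPolynomial (Fin N) K) (c : MvPowerSeries (Fin N) K) : Prop :=
  ∀ ε > 0, ∃ w q r, RatRep Φ q r w ∧ Bd (c - w) ε

variable {Φ : MvPolynomial (Fin N) K}

lemma RatRep.add {q r q' r' : MvPolynomial (Fin N) K} {w w' : MvPowerSeries (Fin N) K} (h : RatRep Φ q r w) (h' : RatRep Φ q' r' w') :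
    RatRep Φ (q * r' + q' * r) (r * r') (w + w') := by
  refine ⟨fun y hy => by rw [map_mul]; exact mul_ne_zero (h.1 y hy) (h'.1 y hy), ?_⟩
  push_cast
  rw [← h.2, ← h'.2]; ring

lemma RatRep.sub {q r q' r' : MvPolynomial (Fin N) K} {w w' : MvPowerSeries (Fin N) K} (h : RatRep Φ q r w) (h' : RatRep Φ q' r' w') :
    RatRep Φ (q * r' + -(q' * r)) (r * r') (w - w') := by
  refine ⟨fun y hy => by rw [map_mul]; exact mul_ne_zero (h.1 y hy) (h'.1 y hy), ?_⟩
  have e : ((-(q' * r) : MvPolynomial (Fin N) K) : MvPowerSeries (Fin N) K) = -((q' * r : MvPolynomial (Fin N) K) : MvPowerSeries (Fin N) K) :=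
    map_neg (MvPolynomial.coeToMvPowerSeries.ringHom) (q' * r)
  rw [MvPolynomial.coe_add, e]
  push_cast
  rw [← h.2, ← h'.2]; ring

lemma RatRep.mul {q r q' r' : MvPolynomial (Fin N) K} {w w' : MvPowerSeries (Fin N) K} (h : RatRep Φ q r w) (h' : RatRep Φ q' r' w') :
    RatRep Φ (q * q') (r * r') (w * w') := by
  refine ⟨fun y hy => by rw [map_mul]; exact mul_ne_zero (h.1 y hy) (h'.1 y hy), ?_⟩
  push_cast
  rw [← h.2, ← h'.2]; ring

lemma RatRep_poly (P : MvPolynomial (Fin N) K) : RatRep Φ P 1 P :=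
  ⟨fun y _ => by simp, by simp⟩

lemma poly_Bd (P : MvPolynomial (Fin N) K) : ∃ C, Bd (P : MvPowerSeries (Fin N) K) C := by
  refine ⟨∑ ν ∈ P.support, ‖P.coeff ν‖, fun ν => ?_⟩
  change ‖MvPowerSeries.coeff ν (P : MvPowerSeries (Fin N) K)‖ ≤ _
  rw [MvPolynomial.coeff_coe]
  by_cases h : ν ∈ P.support
  · exact Finset.single_le_sum (f := fun ν => ‖P.coeff ν‖) (fun _ _ => norm_nonneg _) h
  · rw [MvPolynomial.notMem_support_iff.1 h, norm_zero]
    exact Finset.sum_nonneg fun _ _ => norm_nonneg _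

lemma frob_poly (p : ℕ) (hp : p ≠ 0) (P : MvPolynomial (Fin N) K) :
    frobR p (P : MvPowerSeries (Fin N) K) = ((MvPolynomial.expand p P : MvPolynomial (Fin N) K) : MvPowerSeries (Fin N) K) := by
  rw [frobR_eq p hp, MvPowerSeries.expand_eq_expand]

lemma RatRep.frob {q r : MvPolynomial (Fin N) K} {w : MvPowerSeries (Fin N) K} (h : RatRep Φ q r w) (p : ℕ) (hp : p ≠ 0)
    (hfr : ∀ y ∈ YY Φ, (fun i => y i ^ p) ∈ YY Φ) : RatRep Φ (MvPolynomial.expand p q) (MvPolynomial.expand p r) (frobR p w) := by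
  constructor
  · intro y hy
    have := h.1 _ (hfr y hy)
    have e : MvPolynomial.eval y (MvPolynomial.expand p r) = MvPolynomial.eval (fun i => y i ^ p) r := by
      rw [MvPolynomial.eval_expand]; rfl
    rwa [e]
  · rw [← frob_poly p hp, ← frob_poly p hp, ← h.2, frobR_mul p hp]

lemma small_mem (hΦ : ∀ ν, ‖Φ.coeff ν‖ ≤ 1) (hΦ0 : Φ.coeff 0 = 1) {y : Fin N → K} (hy : ∀ i, ‖y i‖ < 1) : y ∈ YY Φ := by
  refine ⟨fun i => (hy i).le, ?_⟩
  have : ∃ τ : ℝ, 0 ≤ τ ∧ τ < 1 ∧ ∀ i, ‖y i‖ ≤ τ := by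
    by_cases hN : Nonempty (Fin N)
    · obtain ⟨i, hi⟩ := Finite.exists_max (fun i => ‖y i‖)
      exact ⟨‖y i‖, norm_nonneg _, hy i, hi⟩
    · exact ⟨0, by norm_num, by norm_num, fun i => absurd ⟨i⟩ hN⟩
  obtain ⟨τ, h0, h1, h2⟩ := this
  have hd := poly_diff h0 (fun i => (hy i).le) (y := fun _ => 0) (by simp) (by simpa using h2) Φ hΦ
  have e0 : MvPolynomial.eval (fun _ => (0 : K)) Φ = 1 := by
    rw [← hΦ0]
    have := MvPolynomial.eval_zero (R := K) (σ := Fin N)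
    change MvPolynomial.eval 0 Φ = _
    rw [MvPolynomial.eval_zero, MvPolynomial.constantCoeff_eq]
  rw [e0] at hd
  set A := MvPolynomial.eval y Φ
  have e : A = (A - 1) + 1 := by ring
  have hlt2 : ‖A - 1‖ < ‖(1 : K)‖ := by rw [norm_one]; linarith
  rw [e, IsUltrametricDist.norm_add_eq_max_of_norm_ne_norm hlt2.ne, max_eq_right hlt2.le, norm_one]

variable [IsAlgClosed K] {p : ℕ} [hp : Fact p.Prime] (ι : ℚ_[p] →+* K) (hι : ∀ x, ‖ι x‖ = ‖x‖)
  (hΦ : ∀ ν, ‖Φ.coeff ν‖ ≤ 1) (hΦ0 : Φ.coeff 0 = 1)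

include hι hΦ hΦ0

lemma denom_Bd {r : MvPolynomial (Fin N) K} (hr : ∀ y ∈ YY Φ, MvPolynomial.eval y r ≠ 0) :
    (r : MvPowerSeries (Fin N) K) 0 ≠ 0 ∧ Bd (r : MvPowerSeries (Fin N) K) ‖(r : MvPowerSeries (Fin N) K) 0‖ := by
  have h0 : (0 : Fin N → K) ∈ YY Φ := small_mem hΦ hΦ0 (by simp)
  have e0 : MvPolynomial.eval 0 r = (r : MvPowerSeries (Fin N) K) 0 := by
    change _ = MvPowerSeries.coeff 0 (r : MvPowerSeries (Fin N) K)
    rw [MvPolynomial.eval_zero, MvPolynomial.coeff_coe, MvPolynomial.constantCoeff_eq]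
  refine ⟨e0 ▸ hr 0 h0, fun ν => ?_⟩
  rw [← e0]
  change ‖MvPowerSeries.coeff ν (r : MvPowerSeries (Fin N) K)‖ ≤ _
  rw [MvPolynomial.coeff_coe]
  exact nonvanish ι hι hΦ r hr h0 ν

lemma denom_le {r : MvPolynomial (Fin N) K} (hr : ∀ y ∈ YY Φ, MvPolynomial.eval y r ≠ 0) {y : Fin N → K} (hy : y ∈ YY Φ) :
    ‖(r : MvPowerSeries (Fin N) K) 0‖ ≤ ‖MvPolynomial.eval y r‖ := by
  change ‖MvPowerSeries.coeff 0 (r : MvPowerSeries (Fin N) K)‖ ≤ _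
  rw [MvPolynomial.coeff_coe]
  exact nonvanish ι hι hΦ r hr hy 0

lemma RatRep_exists (q : MvPolynomial (Fin N) K) {r : MvPolynomial (Fin N) K} (hr : ∀ y ∈ YY Φ, MvPolynomial.eval y r ≠ 0) :
    ∃ w, RatRep Φ q r w := by
  refine ⟨(r : MvPowerSeries (Fin N) K)⁻¹ * q, hr, ?_⟩
  rw [← mul_assoc, mul_inv_self (denom_Bd ι hι hΦ hΦ0 hr).1, one_mul]

lemma RatRep.bdd {q r : MvPolynomial (Fin N) K} {w : MvPowerSeries (Fin N) K} (h : RatRep Φ q r w) : ∃ C, Bd w C := by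
  obtain ⟨h0, hB⟩ := denom_Bd ι hι hΦ hΦ0 h.1
  obtain ⟨C, hC⟩ := poly_Bd q
  have e : w = (r : MvPowerSeries (Fin N) K)⁻¹ * q := by
    rw [← h.2, ← mul_assoc, mul_comm _ (r : MvPowerSeries (Fin N) K), mul_inv_self h0, one_mul]
  rw [e]
  exact ⟨_, (Bd_inv h0 hB).mul hC⟩

lemma RatRep.eval_le {q r : MvPolynomial (Fin N) K} {w : MvPowerSeries (Fin N) K} (h : RatRep Φ q r w) {ε : ℝ} (hw : Bd w ε)
    {y : Fin N → K} (hy : y ∈ YY Φ) : ‖MvPolynomial.eval y q / MvPolynomial.eval y r‖ ≤ ε := by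
  obtain ⟨h0, hB⟩ := denom_Bd ι hι hΦ hΦ0 h.1
  have hq := hB.mul hw
  rw [h.2] at hq
  have h1 : ‖MvPolynomial.eval y q‖ ≤ ‖(r : MvPowerSeries (Fin N) K) 0‖ * ε := by
    refine poly_eval_le hy.1 q hq.nonneg fun ν => ?_
    rw [← MvPolynomial.coeff_coe]
    exact hq ν
  rw [norm_div, div_le_iff₀ (norm_pos_iff.2 (h.1 y hy)), mul_comm]
  exact h1.trans (mul_le_mul_of_nonneg_right (denom_le ι hι hΦ hΦ0 h.1 hy) hw.nonneg)

lemma RatRep.ev [CompleteSpace K] {q r : MvPolynomial (Fin N) K} {w : MvPowerSeries (Fin N) K} (h : RatRep Φ q r w)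
    {y : Fin N → K} (hy : ∀ i, ‖y i‖ < 1) : Ev y w (MvPolynomial.eval y q / MvPolynomial.eval y r) := by
  obtain ⟨C, hC⟩ := h.bdd ι hι hΦ hΦ0
  obtain ⟨A, hA⟩ := Ev_exists hy hC
  have h1 := Ev_poly_mul r hA
  rw [h.2] at h1
  have h2 := h1.unique (Ev_poly y q)
  have hne := h.1 y (small_mem hΦ hΦ0 hy)
  rw [← h2, mul_div_cancel_left₀ _ hne]
  exact hA

lemma Cl.bdd {c : MvPowerSeries (Fin N) K} (h : Cl Φ c) : ∃ C, Bd c C := by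
  obtain ⟨w, q, r, hw, hB⟩ := h 1 one_pos
  obtain ⟨C, hC⟩ := hw.bdd ι hι hΦ hΦ0
  have := hB.add hC
  rw [sub_add_cancel] at this
  exact ⟨_, this⟩

omit [IsAlgClosed K] hι hΦ hΦ0 in
lemma Cl_poly (P : MvPolynomial (Fin N) K) : Cl Φ P := fun ε hε =>
  ⟨P, P, 1, RatRep_poly P, by rw [sub_self]; intro ν; change ‖(0 : K)‖ ≤ ε; rw [norm_zero]; exact hε.le⟩

omit [IsAlgClosed K] hι hΦ hΦ0 in
lemma RatRep.cl {q r : MvPolynomial (Fin N) K} {w : MvPowerSeries (Fin N) K} (h : RatRep Φ q r w) : Cl Φ w := fun ε hε =>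
  ⟨w, q, r, h, by rw [sub_self]; intro ν; change ‖(0 : K)‖ ≤ ε; rw [norm_zero]; exact hε.le⟩

omit [IsAlgClosed K] hι hΦ hΦ0 in
lemma Cl.add {c d : MvPowerSeries (Fin N) K} (hc : Cl Φ c) (hd : Cl Φ d) : Cl Φ (c + d) := by
  intro ε hε
  obtain ⟨w, q, r, hw, hB⟩ := hc ε hε
  obtain ⟨w', q', r', hw', hB'⟩ := hd ε hε
  refine ⟨_, _, _, hw.add hw', ?_⟩
  rw [add_sub_add_comm]
  exact hB.add_same hB'

lemma Cl.mul {c d : MvPowerSeries (Fin N) K} (hc : Cl Φ c) (hd : Cl Φ d) : Cl Φ (c * d) := by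
  intro ε hε
  obtain ⟨C, hC⟩ := hc.bdd ι hι hΦ hΦ0
  have hC0 := hC.nonneg
  obtain ⟨w', q', r', hw', hB'⟩ := hd (ε / (C + 1)) (by positivity)
  obtain ⟨D, hD⟩ := hw'.bdd ι hι hΦ hΦ0
  have hD0 := hD.nonneg
  obtain ⟨w, q, r, hw, hB⟩ := hc (ε / (D + 1)) (by positivity)
  refine ⟨_, _, _, hw.mul hw', ?_⟩
  have e : c * d - w * w' = c * (d - w') + (c - w) * w' := by ring
  rw [e]
  refine Bd.add_same ((hC.mul hB').mono ?_) ((hB.mul hD).mono ?_)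
  · rw [← mul_div_assoc, div_le_iff₀ (by positivity)]; nlinarith
  · rw [div_mul_eq_mul_div, div_le_iff₀ (by positivity)]; nlinarith

omit [IsAlgClosed K] hι hΦ hΦ0 in
lemma Cl.of_approx {c : MvPowerSeries (Fin N) K} (h : ∀ ε > 0, ∃ d, Cl Φ d ∧ Bd (c - d) ε) : Cl Φ c := by
  intro ε hε
  obtain ⟨d, hd, hB⟩ := h ε hε
  obtain ⟨w, q, r, hw, hB'⟩ := hd ε hε
  refine ⟨w, q, r, hw, ?_⟩
  have := hB.add_same hB'
  rwa [sub_add_sub_cancel] at this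

omit [IsAlgClosed K] hι hΦ hΦ0 in
lemma Cl.frob (hfr : ∀ y ∈ YY Φ, (fun i => y i ^ p) ∈ YY Φ) {c : MvPowerSeries (Fin N) K} (hc : Cl Φ c) : Cl Φ (frobR p c) := by
  intro ε hε
  obtain ⟨w, q, r, hw, hB⟩ := hc ε hε
  refine ⟨_, _, _, hw.frob p hp.out.ne_zero hfr, ?_⟩
  have := hB.frob p
  rwa [frobR_eq p hp.out.ne_zero, map_sub, ← frobR_eq, ← frobR_eq] at this

lemma Cl.smul {c : MvPowerSeries (Fin N) K} (hc : Cl Φ c) (k : K) : Cl Φ (k • c) := by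
  rw [MvPowerSeries.smul_eq_C_mul, ← MvPolynomial.coe_C]
  exact (Cl_poly _).mul ι hι hΦ hΦ0 hc

lemma Cl.sum {ι' : Type*} (s : Finset ι') (f : ι' → MvPowerSeries (Fin N) K) (h : ∀ i ∈ s, Cl Φ (f i)) : Cl Φ (∑ i ∈ s, f i) := by
  induction s using Finset.induction_on with
  | empty =>
    rw [Finset.sum_empty]
    have := Cl_poly (Φ := Φ) 0
    simpa using this
  | insert i s hi ih =>
    rw [Finset.sum_insert hi]
    exact (h i (Finset.mem_insert_self _ _)).add (ih fun j hj => h j (Finset.mem_insert_of_mem hj))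

lemma Cl.pow {c : MvPowerSeries (Fin N) K} (hc : Cl Φ c) (k : ℕ) : Cl Φ (c ^ k) := by
  induction k with
  | zero =>
    rw [pow_zero]
    have := Cl_poly (Φ := Φ) 1
    simpa using this
  | succ k ih => rw [pow_succ]; exact ih.mul ι hι hΦ hΦ0 hc

/-- inverse of `1 - s` for small `s` -/
lemma Cl.geom {s : MvPowerSeries (Fin N) K} (hs : Cl Φ s) {τ : ℝ} (hτ : τ < 1) (hB : Bd s τ) :
    ∃ t, Cl Φ t ∧ (1 - s) * t = 1 := by
  have hτ0 := hB.nonneg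
  have h1 : Bd (1 - s) 1 := (Bd_one.sub hB).mono (max_le le_rfl hτ.le)
  have e0 : (1 - s : MvPowerSeries (Fin N) K) 0 = 1 - s 0 := by
    change MvPowerSeries.coeff 0 (1 - s) = 1 - MvPowerSeries.coeff 0 s
    rw [map_sub, MvPowerSeries.coeff_zero_one]
  have h0 : ‖(1 - s : MvPowerSeries (Fin N) K) 0‖ = 1 := by
    rw [e0, sub_eq_add_neg]
    have : ‖-s 0‖ < ‖(1 : K)‖ := by rw [norm_neg, norm_one]; exact (hB 0).trans_lt hτ
    rw [IsUltrametricDist.norm_add_eq_max_of_norm_ne_norm this.ne', max_eq_left this.le, norm_one]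
  have hne : (1 - s : MvPowerSeries (Fin N) K) 0 ≠ 0 := by rw [← norm_ne_zero_iff, h0]; exact one_ne_zero
  have hBi := Bd_inv hne (by rw [h0]; exact h1)
  rw [h0, inv_one] at hBi
  have hmi := mul_inv_self hne
  refine ⟨(1 - s)⁻¹, ?_, hmi⟩
  refine Cl.of_approx fun ε hε => ?_
  obtain ⟨k, hk⟩ := exists_pow_lt_of_lt_one hε hτ
  refine ⟨∑ i ∈ Finset.range k, s ^ i, Cl.sum ι hι hΦ hΦ0 _ _ fun i _ => hs.pow ι hι hΦ hΦ0 i, ?_⟩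
  have e : (1 - s)⁻¹ - ∑ i ∈ Finset.range k, s ^ i = (1 - s)⁻¹ * s ^ k := by
    have h2 := mul_neg_geom_sum s k
    have h3 : (1 - s)⁻¹ * ((1 - s) * ∑ i ∈ Finset.range k, s ^ i) = ∑ i ∈ Finset.range k, s ^ i := by
      rw [← mul_assoc, mul_comm _ (1 - s), hmi, one_mul]
    rw [← h3, h2]; ring
  rw [e]
  have hpow : ∀ k : ℕ, Bd (s ^ k) (τ ^ k) := by
    intro k
    induction k with
    | zero => simpa using Bd_one
    | succ k ih => rw [pow_succ, pow_succ]; exact ih.mul hB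
  exact (hBi.mul (hpow k)).mono (by linarith)

end rat
end AHGp

namespace AHGp
open AHG
set_option linter.unusedSectionVars false

/-- the truncation `Φ_1` as an integral polynomial -/
noncomputable def PhiZ (p : ℕ) {n N : ℕ} (a : Fin (N + 1) → Fin n → ℤ) : MvPolynomial (Fin N) ℤ :=
  ∑ l ∈ (Fintype.piFinset fun _ : Fin N => Finset.range p).filter
      (fun l => l ∈ LplusSet a ∧ ∑ i : Fin N, l i ≤ p - 1),
    MvPolynomial.monomial (Finsupp.equivFunOnFinite.symm l)
      ((-1 : ℤ) ^ (∑ i : Fin N, l i) * (Nat.multinomial Finset.univ l : ℤ))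

/-- the truncation `Φ_1` as a polynomial over `K` -/
noncomputable def PhiK (p : ℕ) {n N : ℕ} (a : Fin (N + 1) → Fin n → ℤ) (K : Type*) [Field K] :
    MvPolynomial (Fin N) K :=
  MvPolynomial.map (Int.castRingHom K) (PhiZ p a)

section phi
variable {p : ℕ} [hp : Fact p.Prime] {K : Type*} [NormedField K] [IsUltrametricDist K]
  {n N : ℕ} {a : Fin (N + 1) → Fin n → ℤ}

lemma PhiK_eval (lam : Fin (N + 1) → K) :
    MvPolynomial.eval (fun i => lam i.succ / lam 0) (PhiK p a K) = Phi1 p a lam := by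
  unfold PhiK PhiZ Phi1
  rw [map_sum, map_sum]
  refine Finset.sum_congr rfl fun l _ => ?_
  rw [MvPolynomial.map_monomial, MvPolynomial.eval_monomial, Finsupp.prod_fintype _ _ (by simp)]
  simp

lemma PhiK_coeff (ν : Fin N →₀ ℕ) : (PhiK p a K).coeff ν = Phi1Series p a K ν := by
  unfold PhiK PhiZ Phi1Series
  rw [MvPolynomial.coeff_map, MvPolynomial.coeff_sum]
  simp only [MvPolynomial.coeff_monomial]
  have e : ∀ l : Fin N → ℕ, (Finsupp.equivFunOnFinite.symm l = ν) ↔ l = (ν : Fin N → ℕ) := by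
    intro l
    rw [Equiv.symm_apply_eq]
    rfl
  simp only [e]
  rw [Finset.sum_ite_eq']
  have hpp := hp.out.pos
  have hm : ((ν : Fin N → ℕ) ∈ (Fintype.piFinset fun _ : Fin N => Finset.range p).filter
      (fun l => l ∈ LplusSet a ∧ ∑ i : Fin N, l i ≤ p - 1)) ↔
      ((fun i => ν i) ∈ LplusSet a ∧ ∑ i : Fin N, ν i ≤ p - 1) := by
    rw [Finset.mem_filter]
    constructor
    · exact fun h => h.2
    · intro h
      refine ⟨?_, h⟩
      rw [Fintype.mem_piFinset]
      intro i
      rw [Finset.mem_range]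
      have := Finset.single_le_sum (f := fun i => ν i) (fun i _ => Nat.zero_le _) (Finset.mem_univ i)
      have h2 := h.2
      omega
  by_cases h : ((fun i => ν i) ∈ LplusSet a ∧ ∑ i : Fin N, ν i ≤ p - 1)
  · rw [if_pos (hm.2 h), if_pos h]; simp
  · rw [if_neg (fun h' => h (hm.1 h')), if_neg h]; simp

lemma PhiK_coe : (PhiK p a K : MvPowerSeries (Fin N) K) = Phi1Series p a K := by
  ext ν
  rw [MvPolynomial.coeff_coe, PhiK_coeff]; rfl

lemma PhiK_le (ν : Fin N →₀ ℕ) : ‖(PhiK p a K).coeff ν‖ ≤ 1 := by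
  rw [PhiK_coeff]; exact Phi1_Bd ν

lemma PhiK_zero : (PhiK p a K).coeff 0 = 1 := by
  rw [PhiK_coeff]; exact Phi1_zero

lemma PhiK_frob (ι : ℚ_[p] →+* K) (hι : ∀ x, ‖ι x‖ = ‖x‖) (y : Fin N → K)
    (hy : y ∈ YY (PhiK p a K)) : (fun i => y i ^ p) ∈ YY (PhiK p a K) := by
  obtain ⟨h1, h2⟩ := hy
  refine ⟨fun i => by rw [norm_pow]; exact pow_le_one₀ (norm_nonneg _) (h1 i), ?_⟩
  have hd : MvPolynomial.C ((p : ℕ) : ℤ) ∣ MvPolynomial.expand p (PhiZ p a) - PhiZ p a ^ p := by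
    rw [MvPolynomial.C_dvd_iff_zmod, map_sub, MvPolynomial.map_expand, MvPolynomial.expand_zmod,
      map_pow, sub_self]
  obtain ⟨Ψ, hΨ⟩ := hd
  have h3 := congrArg (MvPolynomial.eval y) (congrArg (MvPolynomial.map (Int.castRingHom K)) hΨ)
  rw [map_sub, map_sub, MvPolynomial.map_expand, map_pow, map_pow, map_mul, map_mul,
    MvPolynomial.map_C, MvPolynomial.eval_C] at h3
  have h4 : MvPolynomial.eval y (MvPolynomial.expand p (MvPolynomial.map (Int.castRingHom K) (PhiZ p a)))
      = MvPolynomial.eval (fun i => y i ^ p) (PhiK p a K) := by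
    rw [← MvPolynomial.aeval_eq_eval, ← MvPolynomial.aeval_eq_eval]
    unfold PhiK
    rw [MvPolynomial.aeval_expand]
    rfl
  rw [h4] at h3
  have h5 : ‖MvPolynomial.eval (fun i => y i ^ p) (PhiK p a K) - MvPolynomial.eval y (PhiK p a K) ^ p‖ < 1 := by
    change MvPolynomial.eval (fun i => y i ^ p) (PhiK p a K) - MvPolynomial.eval y (PhiK p a K) ^ p = _ at h3
    rw [h3, norm_mul]
    have e1 : ‖(Int.castRingHom K) ((p : ℕ) : ℤ)‖ = (p : ℝ)⁻¹ := by
      rw [← norm_pK ι hι]; simp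
    have e2 : ‖MvPolynomial.eval y (MvPolynomial.map (Int.castRingHom K) Ψ)‖ ≤ 1 := by
      refine poly_eval_le h1 _ zero_le_one fun ν => ?_
      rw [MvPolynomial.coeff_map]
      exact norm_int_le_one _
    rw [e1]
    have hp1 : (p : ℝ)⁻¹ < 1 := inv_lt_one_of_one_lt₀ (by exact_mod_cast hp.out.one_lt)
    have hp0 : 0 < (p : ℝ)⁻¹ := inv_pos.2 (by exact_mod_cast hp.out.pos)
    nlinarith
  have h6 : ‖MvPolynomial.eval y (PhiK p a K) ^ p‖ = 1 := by rw [norm_pow, h2, one_pow]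
  have h7 := IsUltrametricDist.norm_add_eq_max_of_norm_ne_norm (x := MvPolynomial.eval (fun i => y i ^ p) (PhiK p a K) - MvPolynomial.eval y (PhiK p a K) ^ p) (y := MvPolynomial.eval y (PhiK p a K) ^ p) (by rw [h6]; exact h5.ne)
  rw [sub_add_cancel, h6] at h7
  rw [h7]; exact max_eq_right h5.le

lemma Dplus_YY {lam : Fin (N + 1) → K} (h : lam ∈ Dplus p a (K := K)) :
    (fun i => lam i.succ / lam 0) ∈ YY (PhiK p a K) :=
  ⟨h.2.1, by rw [PhiK_eval]; exact h.2.2⟩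

lemma cons_div (y : Fin N → K) :
    (fun i : Fin N => (Fin.cons 1 y : Fin (N + 1) → K) i.succ / (Fin.cons 1 y : Fin (N + 1) → K) 0) = y := by
  funext i; simp

lemma YY_Dplus {y : Fin N → K} (h : y ∈ YY (PhiK p a K)) :
    (Fin.cons 1 y : Fin (N + 1) → K) ∈ Dplus p a (K := K) := by
  refine ⟨by simp, fun i => by simpa using h.1 i, ?_⟩
  rw [← PhiK_eval, cons_div]; exact h.2

variable [IsAlgClosed K] [CompleteSpace K]

lemma memR'_Cl (ι : ℚ_[p] →+* K) (hι : ∀ x, ‖ι x‖ = ‖x‖) {c : MvPowerSeries (Fin N) K}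
    (h : memR' p a c) : Cl (PhiK p a K) c := by
  obtain ⟨F, ⟨u, hu, hT⟩, hF⟩ := h
  intro ε hε
  rw [Metric.tendstoUniformlyOn_iff] at hT
  obtain ⟨k, hk⟩ := (hT ε hε).exists
  obtain ⟨q, r, hr, hqr⟩ := hu k
  have hr' : ∀ y ∈ YY (PhiK p a K), MvPolynomial.eval y r ≠ 0 := by
    intro y hy
    have := hr _ (YY_Dplus hy)
    rwa [cons_div] at this
  obtain ⟨w, hw⟩ := RatRep_exists ι hι PhiK_le PhiK_zero q hr'
  refine ⟨w, q, r, hw, cauchy_est ι hι hε fun y hy => ?_⟩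
  have hD : (Fin.cons 1 y : Fin (N + 1) → K) ∈ Dplus p a (K := K) := YY_Dplus (small_mem PhiK_le PhiK_zero hy)
  have h1 := hF (Fin.cons 1 y) ⟨by simp, fun i => by simpa using hy i⟩
  have h2 : Ev y c (F (Fin.cons 1 y)) := by
    unfold Ev mon
    simpa using h1
  have h3 := hw.ev ι hι PhiK_le PhiK_zero hy
  refine ⟨_, h2.sub h3, ?_⟩
  have h4 := hk _ hD
  have h5 := hqr _ hD
  rw [cons_div] at h5
  rw [← h5, ← dist_eq_norm]
  exact h4.le

lemma Cl_memR' (ι : ℚ_[p] →+* K) (hι : ∀ x, ‖ι x‖ = ‖x‖) {c : MvPowerSeries (Fin N) K}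
    (h : Cl (PhiK p a K) c) : memR' p a c := by
  have hpos : ∀ k : ℕ, (0 : ℝ) < 1 / ((k : ℝ) + 1) := fun k => Nat.one_div_pos_of_nat
  choose w q r hw hB using fun k : ℕ => h (1 / ((k : ℝ) + 1)) (hpos k)
  set u : ℕ → (Fin (N + 1) → K) → K := fun k lam =>
    MvPolynomial.eval (fun i => lam i.succ / lam 0) (q k) / MvPolynomial.eval (fun i => lam i.succ / lam 0) (r k) with hu
  have hdiff : ∀ k m : ℕ, k ≤ m → ∀ lam ∈ Dplus p a (K := K), dist (u m lam) (u k lam) ≤ 1 / ((k : ℝ) + 1) := by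
    intro k m hkm lam hlam
    have hy := Dplus_YY hlam
    have hb : Bd (w m - w k) (1 / ((k : ℝ) + 1)) := by
      have e : w m - w k = (c - w k) - (c - w m) := by ring
      rw [e]
      exact (hB k).sub_same ((hB m).mono (one_div_le_one_div_of_le (by positivity) (by gcongr)))
    have := ((hw m).sub (hw k)).eval_le ι hι PhiK_le PhiK_zero hb hy
    rw [dist_eq_norm]
    have e : u m lam - u k lam = MvPolynomial.eval (fun i => lam i.succ / lam 0) (q m * r k + -(q k * r m)) /
        MvPolynomial.eval (fun i => lam i.succ / lam 0) (r m * r k) := by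
      rw [hu]
      simp only [map_add, map_neg, map_mul]
      rw [div_sub_div _ _ ((hw m).1 _ hy) ((hw k).1 _ hy)]
      ring
    rw [e]
    exact this
  have hlim : Filter.Tendsto (fun k : ℕ => 1 / ((k : ℝ) + 1)) Filter.atTop (nhds 0) :=
    tendsto_one_div_add_atTop_nhds_zero_nat
  have hcau : UniformCauchySeqOn u Filter.atTop (Dplus p a (K := K)) := by
    rw [Metric.uniformCauchySeqOn_iff]
    intro ε hε
    obtain ⟨k, hk⟩ := (hlim.eventually (gt_mem_nhds (half_pos hε))).exists
    refine ⟨k, fun m hm m' hm' lam hlam => ?_⟩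
    have h1 := hdiff k m hm lam hlam
    have h2 := hdiff k m' hm' lam hlam
    rw [dist_comm] at h2
    have := dist_triangle (u m lam) (u k lam) (u m' lam)
    linarith
  have hex : ∀ lam, ∃ A, lam ∈ Dplus p a (K := K) → Filter.Tendsto (fun k => u k lam) Filter.atTop (nhds A) := by
    intro lam
    by_cases hlam : lam ∈ Dplus p a (K := K)
    · obtain ⟨A, hA⟩ := cauchySeq_tendsto_of_complete (hcau.cauchySeq hlam)
      exact ⟨A, fun _ => hA⟩
    · exact ⟨0, fun h => absurd h hlam⟩
  choose F hF using hex
  refine ⟨F, ⟨u, fun k => ⟨q k, r k, fun lam hlam => (hw k).1 _ (Dplus_YY hlam), fun lam _ => rfl⟩,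
    hcau.tendstoUniformlyOn_of_tendsto fun lam hlam => hF lam hlam⟩, fun lam hlam => ?_⟩
  obtain ⟨C, hC⟩ := h.bdd ι hι PhiK_le PhiK_zero
  obtain ⟨A, hA⟩ := Ev_exists (y := fun i => lam i.succ / lam 0) hlam.2 hC
  have hy := small_mem (Φ := PhiK p a K) PhiK_le PhiK_zero hlam.2
  have hD : lam ∈ Dplus p a (K := K) := ⟨hlam.1, hy.1, by rw [← PhiK_eval]; exact hy.2⟩
  have h1 : ∀ k, dist (u k lam) A ≤ 1 / ((k : ℝ) + 1) := by
    intro k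
    rw [dist_comm, dist_eq_norm]
    exact (hA.sub ((hw k).ev ι hι PhiK_le PhiK_zero hlam.2)).norm_le hy.1 (hB k)
  have h2 : Filter.Tendsto (fun k => u k lam) Filter.atTop (nhds A) :=
    tendsto_iff_dist_tendsto_zero.2 (squeeze_zero (fun _ => dist_nonneg) h1 hlim)
  rw [tendsto_nhds_unique (hF lam hD) h2]
  exact hA

lemma Bone_Cl (Φ : MvPolynomial (Fin N) K) (π : K) (μ : Fin (n + 1) → ℤ) : Cl Φ (Bone p a π μ) := by
  have hfin : {ν : Fin N →₀ ℕ | Bone p a π μ ν ≠ 0}.Finite := by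
    refine (Finset.finite_toSet ((Finset.range ((μ 0).toNat + 1)).biUnion fun m => Finset.finsuppAntidiag (Finset.univ : Finset (Fin N)) m)).subset ?_
    intro ν hν
    simp only [Finset.coe_biUnion, Set.mem_iUnion, Finset.mem_coe, Finset.mem_finsuppAntidiag, Finset.mem_range]
    have : 0 ≤ μ 0 - ∑ i : Fin N, (ν i : ℤ) := by
      by_contra hc
      apply hν
      unfold Bone
      rw [if_neg (fun h => hc h.1)]
    refine ⟨∑ i, ν i, ?_, ?_⟩
    · have e : ((∑ i, ν i : ℕ) : ℤ) = ∑ i : Fin N, (ν i : ℤ) := by push_cast; rfl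
      omega
    · simp
  have : Bone p a π μ = ((∑ ν ∈ hfin.toFinset, MvPolynomial.monomial ν (MvPowerSeries.coeff ν (Bone p a π μ)) : MvPolynomial (Fin N) K) : MvPowerSeries (Fin N) K) := by
    ext ν
    rw [MvPolynomial.coeff_coe, MvPolynomial.coeff_sum]
    simp only [MvPolynomial.coeff_monomial]
    rw [Finset.sum_ite_eq']

    split_ifs with h
    · rfl
    · rw [Set.Finite.mem_toFinset] at h
      by_contra hc
      exact h hc
  rw [this]
  exact Cl_poly _

lemma claim4 (hp3 : 3 ≤ p) (ι : ℚ_[p] →+* K) (hι : ∀ x, ‖ι x‖ = ‖x‖)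
    (π : K) (hπ : π ^ (p - 1) = -(p : K))
    (μ0 : Msub a) 
    (ξ : Msub a → MvPowerSeries (Fin N) K) (hξ : memS a ξ)
    (hinv : invR (ξ μ0)) 
    (η : Msub a → MvPowerSeries (Fin N) K)
    (hη : HasSumR (etaTerm p a π ξ μ0.1) (η μ0))
    (hηB : ∀ ρ, Bd (η ρ) ((p : ℝ)⁻¹ * Rnorm (ξ μ0)))
    (δ : MvPowerSeries (Fin N) K) (hδ : Bd δ (‖π‖ ^ p * Rnorm (ξ μ0)))
    (hδη : η μ0 = ((p : K) • Phi1Series p a K) * frobR p (ξ μ0) + δ)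
    (hS : ∀ μ, memR' p a (ξ μ)) (hR : invR' p a (ξ μ0)) : invR' p a (η μ0) := by
  have hfr := PhiK_frob (a := a) ι hι
  obtain ⟨h0, hB0⟩ := invR_iff.1 hinv
  have hX : 0 < ‖ξ μ0 0‖ := norm_pos_iff.2 h0
  rw [Rnorm_of_Bd hB0] at hδ
  have hπ0 := norm_pi_pos ι hι π hπ
  -- η in the closure
  have hterm : ∀ ν, Cl (PhiK p a K) (etaTerm p a π ξ μ0.1 ν) := by
    intro ν
    unfold etaTerm
    split_ifs
    · exact ((Bone_Cl _ _ _).mul ι hι PhiK_le PhiK_zero (Cl.frob hfr (memR'_Cl ι hι (hS ν)))).smul ι hι PhiK_le PhiK_zero _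
    · have := Cl_poly (Φ := PhiK p a K) 0
      rwa [MvPolynomial.coe_zero] at this
  have hSn : 0 ≤ Snorm a ξ := (memS_Bd hξ μ0).nonneg
  have hηC : Cl (PhiK p a K) (η μ0) := by
    refine Cl.of_approx fun ε hε => ?_
    obtain ⟨s0, hs0⟩ := HasSumR_approx (fun ν => (etaTerm_Bd ι hι π hπ hp3 (memS_Bd hξ) μ0 ν).1)
      (by positivity) (hηB μ0) hη ε hε
    exact ⟨_, Cl.sum ι hι PhiK_le PhiK_zero s0 _ fun i _ => hterm i, hs0 s0 subset_rfl⟩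
  obtain ⟨_, g, hg, hgm⟩ := hR
  have hgi : g = (ξ μ0)⁻¹ := by
    have e := mul_inv_self h0
    calc g = g * (ξ μ0 * (ξ μ0)⁻¹) := by rw [e, mul_one]
      _ = (ξ μ0 * g) * (ξ μ0)⁻¹ := by ring
      _ = _ := by rw [hgm, one_mul]
  have hgB : Bd g ‖ξ μ0 0‖⁻¹ := by rw [hgi]; exact Bd_inv h0 hB0
  have hgC := Cl.frob hfr (memR'_Cl ι hι hg)
  have hf1 : frobR p (ξ μ0) * frobR p g = 1 := by
    rw [← frobR_mul p hp.out.ne_zero, hgm, frobR_eq p hp.out.ne_zero, map_one]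
  -- inverse of Phi
  have hP0 : Phi1Series p a K 0 ≠ 0 := by rw [Phi1_zero]; exact one_ne_zero
  have hPB : Bd (Phi1Series p a K)⁻¹ 1 := by
    have := Bd_inv (f := Phi1Series p a K) hP0 (by rw [Phi1_zero, norm_one]; exact Phi1_Bd)
    rwa [Phi1_zero, norm_one, inv_one] at this
  have hPm := mul_inv_self hP0
  have hPC : Cl (PhiK p a K) (Phi1Series p a K)⁻¹ := by
    refine RatRep.cl (q := 1) (r := PhiK p a K) ⟨fun y hy h => ?_, ?_⟩
    · have := hy.2
      rw [h, norm_zero] at this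
      exact zero_ne_one this
    · rw [PhiK_coe, hPm, MvPolynomial.coe_one]
  set u := (p : K)⁻¹ • ((Phi1Series p a K)⁻¹ * frobR p g) with hu
  have huC : Cl (PhiK p a K) u := (hPC.mul ι hι PhiK_le PhiK_zero hgC).smul ι hι PhiK_le PhiK_zero _
  have hpK : (p : K) ≠ 0 := by
    rw [← norm_pos_iff, norm_pK ι hι]
    exact inv_pos.2 (by exact_mod_cast hp.out.pos)
  have huB : Bd u ((p : ℝ) * (1 * ‖ξ μ0 0‖⁻¹)) := by
    have := (hPB.mul (hgB.frob p)).smul (p : K)⁻¹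
    rwa [norm_inv, norm_pK ι hι, inv_inv] at this
  have hmul : η μ0 * u = 1 + δ * u := by
    rw [hδη, add_mul]
    congr 1
    rw [hu, smul_mul_assoc, smul_mul_smul_comm, mul_inv_cancel₀ hpK, one_smul]
    calc _ = (Phi1Series p a K * (Phi1Series p a K)⁻¹) * (frobR p (ξ μ0) * frobR p g) := by ring
      _ = 1 := by rw [hPm, hf1, one_mul]
  have hsB : Bd (-(δ * u)) ‖π‖ := by
    refine ((hδ.mul huB).neg).mono (le_of_eq ?_)
    have e : ‖π‖ ^ p = ‖π‖ * (p : ℝ)⁻¹ := by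
      rw [← norm_pi_pow ι hι π hπ, ← pow_succ']
      congr 1; omega
    have hpr : (p : ℝ) ≠ 0 := by exact_mod_cast hp.out.ne_zero
    rw [e]
    field_simp
  have hsC : Cl (PhiK p a K) (-(δ * u)) := by
    have h1 : Cl (PhiK p a K) (1 : MvPowerSeries (Fin N) K) := by
      have := Cl_poly (Φ := PhiK p a K) 1
      rwa [MvPolynomial.coe_one] at this
    have h2 := h1.add ((hηC.mul ι hι PhiK_le PhiK_zero huC).smul ι hι PhiK_le PhiK_zero (-1))
    rw [hmul, neg_one_smul] at h2
    convert h2 using 1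
    ring
  obtain ⟨t, htC, ht⟩ := Cl.geom ι hι PhiK_le PhiK_zero hsC (norm_pi_lt ι hι π hπ) hsB
  refine ⟨Cl_memR' ι hι hηC, u * t, Cl_memR' ι hι (huC.mul ι hι PhiK_le PhiK_zero htC), ?_⟩
  rw [← mul_assoc, hmul]
  rwa [sub_neg_eq_add] at ht

lemma final (hp2 : p ≠ 2) (ι : ℚ_[p] →+* K) (hι : ∀ x, ‖ι x‖ = ‖x‖)
    (π : K) (hπ : π ^ (p - 1) = -(p : K)) (hΔ : uniqueInteriorPoint a)
    (μ0 : Msub a) (hμ0 : μ0.1 = hat (a 0))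
    (ξ : Msub a → MvPowerSeries (Fin N) K) (hξ : memS a ξ)
    (hinv : invR (ξ μ0)) (hn0 : Snorm a ξ = Rnorm (ξ μ0))
    (η : Msub a → MvPowerSeries (Fin N) K)
    (hη : ∀ ρ : Msub a, HasSumR (etaTerm p a π ξ ρ.1) (η ρ))
    (hηS : memS a η) :
    invR (η μ0) ∧ Snorm a η = Rnorm (η μ0) ∧
    Rnorm (η μ0) = (p : ℝ)⁻¹ * Rnorm (ξ μ0) ∧
    (memS' p a ξ → invR' p a (ξ μ0) → invR' p a (η μ0)) := by
  have hp3 : 3 ≤ p := by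
    have := hp.out.two_le
    omega
  obtain ⟨hB, δ, hδ, hδη⟩ := eta_main hp3 ι hι π hπ hΔ μ0 hμ0 ξ hξ hinv hn0 η hη hηS
  obtain ⟨h0, hB0⟩ := invR_iff.1 hinv
  have hR := Rnorm_of_Bd hB0
  have hz := eta_zero hp3 ι hι π hπ (ξ μ0) (η μ0) δ h0 (by rw [← hR]; exact hδ) hδη
  rw [← hR] at hz
  have hX : 0 < Rnorm (ξ μ0) := by rw [hR]; exact norm_pos_iff.2 h0
  have hp0 : 0 < (p : ℝ)⁻¹ := inv_pos.2 (by exact_mod_cast hp.out.pos)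
  have hη0 : η μ0 0 ≠ 0 := by
    rw [← norm_pos_iff, hz]; positivity
  have hηB : Bd (η μ0) ‖η μ0 0‖ := by rw [hz]; exact hB μ0
  have hRη := Rnorm_of_Bd hηB
  refine ⟨invR_iff.2 ⟨hη0, hηB⟩, ?_, hRη.trans hz, fun h1 h2 =>
    claim4 hp3 ι hι π hπ μ0 ξ hξ hinv η (hη μ0) hB δ hδ hδη h1.2 h2⟩
  apply le_antisymm
  · have : Nonempty (Msub a) := ⟨μ0⟩
    refine ciSup_le fun μ => ?_
    rw [hRη, hz]
    exact (hB μ).Rnorm_le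
  · exact (memS_Bd hηS μ0).Rnorm_le

end phi
end AHGp


open scoped BigOperators Classical


/-- if `ξ_{â_0}` is invertible in `R` and `‖ξ_{â_0}‖ = ‖ξ‖`, then
`η_{â_0}` is invertible in `R` and `‖α*(ξ)‖ = ‖η_{â_0}‖ = (1/p)‖ξ_{â_0}‖`; if moreover
`ξ ∈ S'` and `ξ_{â_0}` is invertible in `R'`, then `η_{â_0}` is invertible in `R'`. -/
theorem stmt_11 (p : ℕ) [Fact p.Prime] (hp2 : p ≠ 2)
    {K : Type*} [NormedField K] [IsUltrametricDist K] [CompleteSpace K] [IsAlgClosed K]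
    (ι : ℚ_[p] →+* K) (hι : ∀ x, ‖ι x‖ = ‖x‖)
    (π : K) (hπ : π ^ (p - 1) = -(p : K))
    (n N : ℕ) (hn : 0 < n) (hN : 0 < N) (a : Fin (N + 1) → Fin n → ℤ)
    (hΔ : AHG.uniqueInteriorPoint a)
    (μ0 : AHG.Msub a) (hμ0 : μ0.1 = AHG.hat (a 0))
    (ξ : AHG.Msub a → MvPowerSeries (Fin N) K) (hξ : AHG.memS a ξ)
    (hinv : AHG.invR (ξ μ0)) (hn0 : AHG.Snorm a ξ = AHG.Rnorm (ξ μ0))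
    (η : AHG.Msub a → MvPowerSeries (Fin N) K)
    (hη : ∀ ρ : AHG.Msub a, AHG.HasSumR (AHG.etaTerm p a π ξ ρ.1) (η ρ))
    (hηS : AHG.memS a η) :
    AHG.invR (η μ0) ∧
    AHG.Snorm a η = AHG.Rnorm (η μ0) ∧
    AHG.Rnorm (η μ0) = (p : ℝ)⁻¹ * AHG.Rnorm (ξ μ0) ∧
    (AHG.memS' p a ξ → AHG.invR' p a (ξ μ0) → AHG.invR' p a (η μ0)) := by
  exact AHGp.final hp2 ι hι π hπ hΔ μ0 hμ0 ξ hξ hinv hn0 η hη hηS
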